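/- Let n ≥ 1, σ > 0, R₁ > 0, 0 < α < 1, and c > 0. Suppose that for every interval [ℓ,u] ⊆ [−R₁, R₁] and every γ ∈ ℝ, (∫_ℓ^u e^{γt} e^{−t²(1+α)/(2σ²)} dt) · (∫_ℓ^u e^{γt} e^{−t²(1−α)/(2σ²)} dt) ≤ c · (∫_ℓ^u e^{γt} e^{−t²/(2σ²)} dt)². Then for every logconcave function f : ℝⁿ → ℝ≥0 whose support is a compact subset of R₁·B_n, defining G(s) = ∫_{ℝⁿ} f(x) e^{−‖x‖²/(2s)} dx, one has G(σ²/(1+α)) · G(σ²/(1−α)) ≤ c · G(σ²)². -/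

import Mathlib

open MeasureTheory intervalIntegral

/-- A nonnegative function is logconcave if
`f(λx + (1-λ)y) ≥ f(x)^λ · f(y)^{1-λ}`. -/
def LogConcaveFn {E : Type*} [AddCommMonoid E] [Module ℝ E] (f : E → ℝ) : Prop :=
  ∀ x y : E, ∀ l : ℝ, 0 ≤ l → l ≤ 1 →
    f x ^ l * f y ^ (1 - l) ≤ f (l • x + (1 - l) • y)

/-!
The theorem is proved in any finite-dimensional Euclidean space, for Gaussian weights of rates
`β 0`, `β 1`, `β 2` with `β 0 + β 1 = 2 β 2`, by induction on the dimension.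

In dimension at least two, suppose that the inequality fails for `f`. Then there are `s > 0` and
`r` with `s r > c` such that `G₀ = s G₂` and `r G₂ < G₁`, where `Gᵢ` is the integral of `f` against
the `i`-th weight. Both relations are linear in `f`, so they can be preserved while `f` is cut by
hyperplanes containing a prescribed subspace of codimension two: in the corresponding
two-dimensional projection there is, through every point, a line that bisects them. Cutting through
a dense sequence of points leaves a planar convex set with empty interior, hence after finitely many
cuts `f` lives in an arbitrarily thin slab. There the three weights are nearly constant in the
direction orthogonal to the slab, where `β 0 + β 1 = 2 β 2` makes their constants cancel, and the
marginal of `f` along that direction, which is logconcave by the Prékopa–Leindler inequality,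
satisfies the inequality in dimension one less.

On the line, the integrals are replaced by sums over a fine grid. The logconcave profiles on the
grid with `G₂ = 1` and `G₀ = s` form a compact set, so `G₁` is maximal at an extreme point. An
extreme point `u` is an exponential needle: otherwise an exponential `e` can be chosen so that
`u = min u e + (u - min u e)` splits `u` into two nonproportional logconcave profiles that both
satisfy `G₀ = s G₂`.
-/

/-- Log-concavity of the values `h i` taken at the nodes `x i`. With `x = id` this is log-concavity
of a nonnegative function; with finitely many nodes it is its discrete analogue. Nodes may
repeat. -/
structure IsLogConcave {ι E : Type*} [AddCommGroup E] [Module ℝ E] (x : ι → E) (h : ι → ℝ) :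
    Prop where
  nonneg : ∀ i, 0 ≤ h i
  rpow_mul_rpow_le : ∀ ⦃i j k : ι⦄ ⦃l : ℝ⦄, 0 ≤ l → l ≤ 1 → x j = l • x i + (1 - l) • x k →
    h i ^ l * h k ^ (1 - l) ≤ h j

lemma LogConcaveFn.isLogConcave {E : Type*} [AddCommGroup E] [Module ℝ E] {f : E → ℝ}
    (hf : LogConcaveFn f) (hf0 : ∀ x, 0 ≤ f x) : IsLogConcave id f where
  nonneg := hf0
  rpow_mul_rpow_le := by
    rintro i _ k l hl0 hl1 rfl
    exact hf i k l hl0 hl1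

lemma rpow_mul_rpow_one_sub {a : ℝ} (ha : 0 ≤ a) (l : ℝ) : a ^ l * a ^ (1 - l) = a := by
  rw [← Real.rpow_add' ha (by simp), add_sub_cancel, Real.rpow_one]

lemma geom_mean_add_le {x y u v l : ℝ} (hx : 0 ≤ x) (hy : 0 ≤ y) (hu : 0 < u) (hv : 0 < v)
    (hl0 : 0 ≤ l) (hl1 : l ≤ 1) :
    x ^ l * y ^ (1 - l) + u ^ l * v ^ (1 - l) ≤ (x + u) ^ l * (y + v) ^ (1 - l) := by
  have hxu : 0 < x + u := by positivity
  have hyv : 0 < y + v := by positivity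
  have amgm {a b : ℝ} (ha : 0 ≤ a) (hb : 0 ≤ b) :
      a ^ l * b ^ (1 - l) / ((x + u) ^ l * (y + v) ^ (1 - l)) ≤
        l * (a / (x + u)) + (1 - l) * (b / (y + v)) := by
    rw [mul_div_mul_comm, ← Real.div_rpow ha hxu.le, ← Real.div_rpow hb hyv.le]
    exact Real.geom_mean_le_arith_mean2_weighted hl0 (sub_nonneg.2 hl1) (by positivity)
      (by positivity) (by ring)
  rw [← div_le_one (by positivity), add_div]
  calc _ ≤ _ := add_le_add (amgm hx hy) (amgm hu.le hv.le)
    _ = 1 := by field_simp; ring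

namespace IsLogConcave

variable {ι κ E E' : Type*} [AddCommGroup E] [Module ℝ E] [AddCommGroup E'] [Module ℝ E']
  {x : ι → E} {h h' : ι → ℝ}

lemma of_pos (h0 : ∀ i, 0 ≤ h i)
    (H : ∀ ⦃i j k : ι⦄ ⦃l : ℝ⦄, 0 < l → l < 1 → x j = l • x i + (1 - l) • x k → 0 < h i → 0 < h k →
      h i ^ l * h k ^ (1 - l) ≤ h j) : IsLogConcave x h := by
  have le_of_eq ⦃i j : ι⦄ (hij : x j = x i) : h i ≤ h j := by
    rcases (h0 i).eq_or_lt with hi | hi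
    · exact hi ▸ h0 j
    · have := H (l := 1 / 2) (by norm_num) (by norm_num)
        (by rw [hij, ← add_smul]; norm_num) hi hi
      rwa [rpow_mul_rpow_one_sub hi.le] at this
  refine ⟨h0, fun i j k l hl0 hl1 hj => ?_⟩
  rcases hl0.eq_or_lt with rfl | hl0
  · simpa using le_of_eq (i := k) (by simpa using hj)
  rcases hl1.eq_or_lt with rfl | hl1
  · simpa using le_of_eq (i := i) (by simpa using hj)
  rcases (h0 i).eq_or_lt with hi | hi
  · simpa [← hi, hl0.ne'] using h0 j
  rcases (h0 k).eq_or_lt with hk | hk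
  · simpa [← hk, (sub_pos.2 hl1).ne'] using h0 j
  exact H hl0 hl1 hj hi hk

lemma const {r : ℝ} (hr : 0 ≤ r) : IsLogConcave x fun _ => r :=
  ⟨fun _ => hr, fun _ _ _ l _ _ _ => (rpow_mul_rpow_one_sub hr l).le⟩

lemma const_mul (hh : IsLogConcave x h) {r : ℝ} (hr : 0 ≤ r) :
    IsLogConcave x fun i => r * h i := by
  refine ⟨fun i => mul_nonneg hr (hh.nonneg i), fun i j k l hl0 hl1 hj => ?_⟩
  rw [Real.mul_rpow hr (hh.nonneg i), Real.mul_rpow hr (hh.nonneg k), mul_mul_mul_comm,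
    rpow_mul_rpow_one_sub hr]
  exact mul_le_mul_of_nonneg_left (hh.rpow_mul_rpow_le hl0 hl1 hj) hr

lemma min (hh : IsLogConcave x h) (hh' : IsLogConcave x h') :
    IsLogConcave x fun i => min (h i) (h' i) := by
  have h0 (i) : 0 ≤ Min.min (h i) (h' i) := le_min (hh.nonneg i) (hh'.nonneg i)
  refine ⟨h0, fun i j k l hl0 hl1 hj => le_min ?_ ?_⟩
  · exact (mul_le_mul (Real.rpow_le_rpow (h0 i) (min_le_left _ _) hl0)
      (Real.rpow_le_rpow (h0 k) (min_le_left _ _) (sub_nonneg.2 hl1))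
      (Real.rpow_nonneg (h0 k) _) (Real.rpow_nonneg (hh.nonneg i) _)).trans
        (hh.rpow_mul_rpow_le hl0 hl1 hj)
  · exact (mul_le_mul (Real.rpow_le_rpow (h0 i) (min_le_right _ _) hl0)
      (Real.rpow_le_rpow (h0 k) (min_le_right _ _) (sub_nonneg.2 hl1))
      (Real.rpow_nonneg (h0 k) _) (Real.rpow_nonneg (hh'.nonneg i) _)).trans
        (hh'.rpow_mul_rpow_le hl0 hl1 hj)

lemma indicator (hh : IsLogConcave x h) {D : Set E} (hD : Convex ℝ D) :
    IsLogConcave x ((x ⁻¹' D).indicator h) := by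
  refine of_pos (Set.indicator_nonneg fun i _ => hh.nonneg i) fun i j k l hl0 hl1 hj hi hk => ?_
  have hiD : i ∈ x ⁻¹' D := Set.mem_of_indicator_ne_zero hi.ne'
  have hkD : k ∈ x ⁻¹' D := Set.mem_of_indicator_ne_zero hk.ne'
  have hjD : j ∈ x ⁻¹' D := by
    rw [Set.mem_preimage, hj]
    exact hD hiD hkD hl0.le (sub_nonneg.2 hl1.le) (add_sub_cancel _ _)
  rw [Set.indicator_of_mem hiD, Set.indicator_of_mem hjD, Set.indicator_of_mem hkD]
  exact hh.rpow_mul_rpow_le hl0.le hl1.le hj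

lemma reindex (hh : IsLogConcave x h) (e : κ → ι) : IsLogConcave (x ∘ e) (h ∘ e) :=
  ⟨fun i => hh.nonneg (e i), fun _ _ _ _ hl0 hl1 hj => hh.rpow_mul_rpow_le hl0 hl1 hj⟩

lemma of_map_nodes (φ : E →ᵃ[ℝ] E') (hh : IsLogConcave (φ ∘ x) h) : IsLogConcave x h :=
  ⟨hh.nonneg, fun i j k l hl0 hl1 hj => hh.rpow_mul_rpow_le hl0 hl1 <| by
    simpa [hj] using Convex.combo_affine_apply (f := φ) (x := x i) (y := x k) (add_sub_cancel l 1)⟩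

lemma comp_affineMap {F : E' → ℝ} (hF : IsLogConcave id F) (φ : E →ᵃ[ℝ] E') :
    IsLogConcave id fun y => F (φ y) :=
  of_map_nodes φ (hF.reindex φ)

lemma exp_affine (x : ι → ℝ) (a b t : ℝ) :
    IsLogConcave x fun i => Real.exp (a + b * (x i - t)) := by
  refine ⟨fun i => (Real.exp_pos _).le, fun i j k l _ _ hj => le_of_eq ?_⟩
  rw [← Real.exp_mul, ← Real.exp_mul, ← Real.exp_add, hj, smul_eq_mul, smul_eq_mul]
  ring_nf

lemma eq_of_node_eq (hh : IsLogConcave x h) {i j : ι} (hij : x i = x j) : h i = h j := by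
  refine le_antisymm ?_ ?_
  · simpa using hh.rpow_mul_rpow_le (i := i) (j := j) (k := i) zero_le_one le_rfl (by simp [hij])
  · simpa using hh.rpow_mul_rpow_le (i := j) (j := i) (k := j) zero_le_one le_rfl (by simp [hij])

lemma sub_min_exp_affine {x : ι → ℝ} (hh : IsLogConcave x h) (a b t : ℝ) :
    IsLogConcave x fun i => h i - Min.min (h i) (Real.exp (a + b * (x i - t))) := by
  set e : ι → ℝ := fun i => Real.exp (a + b * (x i - t))
  refine of_pos (fun i => sub_nonneg.2 (min_le_left _ _)) fun i j k l hl0 hl1 hj hi hk => ?_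
  have lt_of_pos {i : ι} (hi : 0 < h i - Min.min (h i) (e i)) : e i < h i := by
    by_contra! hc
    simp [min_eq_left hc] at hi
  have hi := lt_of_pos hi
  have hk := lt_of_pos hk
  have e_combo : e j = e i ^ l * e k ^ (1 - l) := by
    simp only [e]
    rw [← Real.exp_mul, ← Real.exp_mul, ← Real.exp_add, hj, smul_eq_mul, smul_eq_mul]
    ring_nf
  have superadd := geom_mean_add_le (sub_nonneg.2 hi.le) (sub_nonneg.2 hk.le)
    (Real.exp_pos (a + b * (x i - t))) (Real.exp_pos (a + b * (x k - t))) hl0.le hl1.le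
  rw [sub_add_cancel, sub_add_cancel] at superadd
  change (h i - Min.min (h i) (e i)) ^ l * (h k - Min.min (h k) (e k)) ^ (1 - l) ≤ _
  rw [min_eq_right hi.le, min_eq_right hk.le]
  linarith [hh.rpow_mul_rpow_le hl0.le hl1.le hj, min_le_right (h j) (e j)]

lemma quasiconcaveOn {f : E → ℝ} (hf : IsLogConcave id f) : QuasiconcaveOn ℝ Set.univ f := by
  rintro r x ⟨-, hx⟩ y ⟨-, hy⟩ a b ha hb hab
  obtain rfl : b = 1 - a := by linarith
  refine ⟨trivial, ?_⟩
  rcases le_total r 0 with hr | hr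
  · exact hr.trans (hf.nonneg _)
  calc r = r ^ a * r ^ (1 - a) := (rpow_mul_rpow_one_sub hr a).symm
    _ ≤ f x ^ a * f y ^ (1 - a) :=
        mul_le_mul (Real.rpow_le_rpow hr hx ha) (Real.rpow_le_rpow hr hy hb)
          (Real.rpow_nonneg hr _) (Real.rpow_nonneg (hf.nonneg _) _)
    _ ≤ _ := hf.rpow_mul_rpow_le ha (by linarith) rfl

lemma pos_of_mem_segment (hh : IsLogConcave x h) {i j k : ι} (hi : 0 < h i) (hk : 0 < h k)
    (hj : x j ∈ segment ℝ (x i) (x k)) : 0 < h j := by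
  obtain ⟨l, l', hl, hl', hll, hj⟩ := hj
  obtain rfl : l' = 1 - l := by linarith
  exact (mul_pos (Real.rpow_pos_of_pos hi l) (Real.rpow_pos_of_pos hk _)).trans_le
    (hh.rpow_mul_rpow_le hl (by linarith) hj.symm)

end IsLogConcave

/-! ### The Prékopa–Leindler inequality on the line -/

open scoped Pointwise in
lemma volume_add_volume_le {A B C : Set ℝ} (hA : A.Nonempty) (hB : B.Nonempty)
    (hC : C.OrdConnected) (h : A + B ⊆ C) : volume A + volume B ≤ volume C := by
  have edist_add_le_of_le {a a' b b' : ℝ} (ha : a ∈ A) (ha' : a' ∈ A) (hb : b ∈ B) (hb' : b' ∈ B)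
      (haa : a ≤ a') (hbb : b ≤ b') : edist a a' + edist b b' ≤ volume C := by
    calc edist a a' + edist b b' = volume (Set.Icc (a + b) (a' + b')) := by
          rw [Real.volume_Icc, edist_comm, edist_comm b, edist_dist, edist_dist, Real.dist_eq,
            Real.dist_eq, abs_of_nonneg (sub_nonneg.2 haa), abs_of_nonneg (sub_nonneg.2 hbb),
            ← ENNReal.ofReal_add (sub_nonneg.2 haa) (sub_nonneg.2 hbb)]
          ring_nf
      _ ≤ volume C := measure_mono
          (hC.out (h (Set.add_mem_add ha hb)) (h (Set.add_mem_add ha' hb')))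
  have edist_add_le {a a' b b' : ℝ} (ha : a ∈ A) (ha' : a' ∈ A) (hb : b ∈ B) (hb' : b' ∈ B) :
      edist a a' + edist b b' ≤ volume C := by
    rcases le_total a a' with haa | haa <;> rcases le_total b b' with hbb | hbb
    · exact edist_add_le_of_le ha ha' hb hb' haa hbb
    · exact edist_comm b b' ▸ edist_add_le_of_le ha ha' hb' hb haa hbb
    · exact edist_comm a a' ▸ edist_add_le_of_le ha' ha hb hb' haa hbb
    · exact edist_comm a a' ▸ edist_comm b b' ▸ edist_add_le_of_le ha' ha hb' hb haa hbb
  calc volume A + volume B ≤ Metric.ediam A + Metric.ediam B :=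
        add_le_add (Real.volume_le_diam A) (Real.volume_le_diam B)
    _ ≤ volume C :=
        ENNReal.biSup_add_biSup_le hA hB fun a ha b hb =>
          ENNReal.biSup_add_biSup_le hA hB fun a' ha' b' hb' => edist_add_le ha ha' hb hb'

open scoped Pointwise in
lemma weighted_volume_le {A B C : Set ℝ} {l : ℝ} (hl0 : 0 < l) (hl1 : l < 1) (hA : A.Nonempty)
    (hB : B.Nonempty) (hC : C.OrdConnected) (h : ∀ a ∈ A, ∀ b ∈ B, l * a + (1 - l) * b ∈ C) :
    ENNReal.ofReal l * volume A + ENNReal.ofReal (1 - l) * volume B ≤ volume C := by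
  have hscale (r : ℝ) (hr : 0 < r) (S : Set ℝ) : volume (r • S) = ENNReal.ofReal r * volume S := by
    rw [Measure.addHaar_smul_of_nonneg _ hr.le, Module.finrank_self, pow_one]
  rw [← hscale l hl0, ← hscale _ (sub_pos.2 hl1)]
  refine volume_add_volume_le hA.smul_set hB.smul_set hC ?_
  rintro _ ⟨_, ⟨a, ha, rfl⟩, _, ⟨b, hb, rfl⟩, rfl⟩
  exact h a ha b hb

lemma integral_combo_le_of_isLUB_one {f g h : ℝ → ℝ} {l : ℝ} (hl0 : 0 < l) (hl1 : l < 1)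
    (hf : Integrable f) (hg : Integrable g) (hh : Integrable h) (hf0 : ∀ x, 0 ≤ f x)
    (hg0 : ∀ x, 0 ≤ g x) (hh0 : ∀ x, 0 ≤ h x) (hf1 : IsLUB (Set.range f) 1)
    (hg1 : IsLUB (Set.range g) 1) (hhq : QuasiconcaveOn ℝ Set.univ h)
    (H : ∀ x y, f x ^ l * g y ^ (1 - l) ≤ h (l * x + (1 - l) * y)) :
    l * (∫ x, f x) + (1 - l) * (∫ x, g x) ≤ ∫ x, h x := by
  have hl1' : 0 < 1 - l := sub_pos.2 hl1
  have layer {k : ℝ → ℝ} (hk : Integrable k) (hk0 : ∀ x, 0 ≤ k x) :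
      ENNReal.ofReal (∫ x, k x) = ∫⁻ t in Set.Ioi 0, volume {x | t < k x} := by
    rw [ofReal_integral_eq_lintegral_ofReal hk (.of_forall hk0),
      lintegral_eq_lintegral_meas_lt volume (.of_forall hk0) hk.aemeasurable]
  have hmeas (k : ℝ → ℝ) : Measurable fun t => volume {x | t < k x} :=
    Antitone.measurable fun s t hst => measure_mono fun x (hx : t < k x) => hst.trans_lt hx
  have hne {k : ℝ → ℝ} (hk : IsLUB (Set.range k) 1) {t : ℝ} (ht : t < 1) :
      {x | t < k x}.Nonempty := by
    obtain ⟨_, ⟨x, rfl⟩, hx, -⟩ := hk.exists_between ht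
    exact ⟨x, hx⟩
  have hempty {k : ℝ → ℝ} (hk : IsLUB (Set.range k) 1) {t : ℝ} (ht : 1 ≤ t) :
      {x | t < k x} = ∅ :=
    Set.eq_empty_of_forall_notMem fun x hx => (ht.trans_lt hx).not_ge (hk.1 ⟨x, rfl⟩)
  rw [← ENNReal.ofReal_le_ofReal_iff (integral_nonneg hh0),
    ENNReal.ofReal_add (mul_nonneg hl0.le (integral_nonneg hf0))
      (mul_nonneg hl1'.le (integral_nonneg hg0)), ENNReal.ofReal_mul hl0.le,
    ENNReal.ofReal_mul hl1'.le, layer hf hf0, layer hg hg0, layer hh hh0,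
    ← lintegral_const_mul _ (hmeas f), ← lintegral_const_mul _ (hmeas g),
    ← lintegral_add_left ((hmeas f).const_mul _)]
  refine setLIntegral_mono (hmeas h) fun t (ht : 0 < t) => ?_
  rcases lt_or_ge t 1 with ht1 | ht1
  · refine weighted_volume_le hl0 hl1 (hne hf1 ht1) (hne hg1 ht1) ?_ fun a ha b hb => ?_
    · simpa using (hhq.convex_gt t).ordConnected
    · calc t = t ^ l * t ^ (1 - l) := (rpow_mul_rpow_one_sub ht.le l).symm
        _ < f a ^ l * g b ^ (1 - l) :=
            mul_lt_mul'' (Real.rpow_lt_rpow ht.le ha hl0) (Real.rpow_lt_rpow ht.le hb hl1')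
              (Real.rpow_nonneg ht.le _) (Real.rpow_nonneg ht.le _)
        _ ≤ _ := H a b
  · simp [hempty hf1 ht1, hempty hg1 ht1]

lemma isLUB_range_div_iSup {f : ℝ → ℝ} (hf : BddAbove (Set.range f)) (hf0 : 0 < ⨆ x, f x) :
    IsLUB (Set.range fun x => f x / ⨆ y, f y) 1 := by
  refine ⟨?_, fun b hb => ?_⟩
  · rintro _ ⟨x, rfl⟩
    exact (div_le_one hf0).2 (le_ciSup hf x)
  · have : ⨆ x, f x ≤ b * ⨆ x, f x :=
      ciSup_le fun x => (div_le_iff₀ hf0).1 (hb ⟨x, rfl⟩)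
    exact le_of_mul_le_mul_right (by rwa [one_mul]) hf0

lemma iSup_pos_of_integral_pos {f : ℝ → ℝ} (hf : BddAbove (Set.range f)) (h : 0 < ∫ x, f x) :
    0 < ⨆ x, f x := by
  by_contra! hsup
  exact h.not_ge (integral_nonpos fun x => (le_ciSup hf x).trans hsup)

theorem prekopa_leindler {f g h : ℝ → ℝ} {l : ℝ} (hl0 : 0 < l) (hl1 : l < 1)
    (hf : Integrable f) (hg : Integrable g) (hh : Integrable h) (hf0 : ∀ x, 0 ≤ f x)
    (hg0 : ∀ x, 0 ≤ g x) (hh0 : ∀ x, 0 ≤ h x) (hfb : BddAbove (Set.range f))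
    (hgb : BddAbove (Set.range g)) (hhq : QuasiconcaveOn ℝ Set.univ h)
    (H : ∀ x y, f x ^ l * g y ^ (1 - l) ≤ h (l * x + (1 - l) * y)) :
    (∫ x, f x) ^ l * (∫ x, g x) ^ (1 - l) ≤ ∫ x, h x := by
  have hl1' : 0 < 1 - l := sub_pos.2 hl1
  have If0 : 0 ≤ ∫ x, f x := integral_nonneg hf0
  have Ig0 : 0 ≤ ∫ x, g x := integral_nonneg hg0
  rcases If0.eq_or_lt with If | If
  · simpa [← If, hl0.ne'] using integral_nonneg hh0
  rcases Ig0.eq_or_lt with Ig | Ig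
  · simpa [← Ig, hl1'.ne'] using integral_nonneg hh0
  have hF := iSup_pos_of_integral_pos hfb If
  have hG := iSup_pos_of_integral_pos hgb Ig
  set F := ⨆ x, f x
  set G := ⨆ x, g x
  have hK : 0 < F ^ l * G ^ (1 - l) := by positivity
  have normalized := integral_combo_le_of_isLUB_one hl0 hl1 (hf.div_const F) (hg.div_const G)
    (hh.div_const (F ^ l * G ^ (1 - l))) (fun x => div_nonneg (hf0 x) hF.le)
    (fun x => div_nonneg (hg0 x) hG.le) (fun x => div_nonneg (hh0 x) hK.le)
    (isLUB_range_div_iSup hfb hF) (isLUB_range_div_iSup hgb hG)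
    (fun r => by simpa only [le_div_iff₀ hK] using hhq (r * (F ^ l * G ^ (1 - l))))
    (fun x y => by
      rw [Real.div_rpow (hf0 x) hF.le, Real.div_rpow (hg0 y) hG.le, div_mul_div_comm]
      exact div_le_div_of_nonneg_right (H x y) hK.le)
  simp only [MeasureTheory.integral_div] at normalized
  rw [← div_le_div_iff_of_pos_right hK, mul_div_mul_comm, ← Real.div_rpow If0 hF.le,
    ← Real.div_rpow Ig0 hG.le]
  exact (Real.geom_mean_le_arith_mean2_weighted hl0.le hl1'.le (by positivity) (by positivity)
    (by ring)).trans normalized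

theorem IsLogConcave.marginal {E : Type*} [AddCommGroup E] [Module ℝ E] {F : E × ℝ → ℝ}
    (hF : IsLogConcave id F) (hint : ∀ x, Integrable fun t => F (x, t))
    (hbdd : ∀ x, BddAbove (Set.range fun t => F (x, t))) :
    IsLogConcave id fun x => ∫ t, F (x, t) := by
  refine .of_pos (fun x => integral_nonneg fun t => hF.nonneg _)
    fun x y z l hl0 hl1 hy _ _ => ?_
  have hsec : IsLogConcave id fun t => F (y, t) :=
    hF.comp_affineMap ((AffineMap.const ℝ ℝ y).prod (AffineMap.id ℝ ℝ))
  refine prekopa_leindler hl0 hl1 (hint x) (hint z) (hint y) (fun t => hF.nonneg _)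
    (fun t => hF.nonneg _) (fun t => hF.nonneg _) (hbdd x) (hbdd z) hsec.quasiconcaveOn
    fun s t => hF.rpow_mul_rpow_le hl0.le hl1.le ?_
  simpa using hy

/-! ### Localization on finitely many nodes -/

/-- An exponential needle: an exponential profile on the nodes of an interval, zero elsewhere. -/
def IsNeedle {ι : Type*} (x u : ι → ℝ) : Prop :=
  ∃ p q r m : ℝ, 0 ≤ r ∧ u = (x ⁻¹' Set.Icc p q).indicator fun j => r * Real.exp (m * x j)

lemma isClosed_setOf_isLogConcave {ι : Type*} (x : ι → ℝ) :
    IsClosed {k : ι → ℝ | IsLogConcave x k} := by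
  have hset : {k : ι → ℝ | IsLogConcave x k} = {k | ∀ i, 0 ≤ k i} ∩
      {k | ∀ ⦃i j m : ι⦄ ⦃l : ℝ⦄, 0 ≤ l → l ≤ 1 → x j = l • x i + (1 - l) • x m →
        k i ^ l * k m ^ (1 - l) ≤ k j} :=
    Set.ext fun k => ⟨fun h => ⟨h.1, h.2⟩, fun h => ⟨h.1, h.2⟩⟩
  simp only [hset, Set.ofPred_forall]
  refine (isClosed_iInter fun i => isClosed_le continuous_const (continuous_apply i)).inter
    (isClosed_iInter fun i => isClosed_iInter fun j => isClosed_iInter fun k =>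
      isClosed_iInter fun l => isClosed_iInter fun hl0 => isClosed_iInter fun hl1 =>
      isClosed_iInter fun _ => isClosed_le ?_ (continuous_apply j))
  exact ((Real.continuous_rpow_const hl0).comp (continuous_apply i)).mul
    ((Real.continuous_rpow_const (sub_nonneg.2 hl1)).comp (continuous_apply k))

section DiscreteLocalization

variable {ι : Type*} [Fintype ι] {x g v u k : ι → ℝ}

/-- The log-concave profiles normalized by the functional `g` and annihilated by `v`. -/
def balancedProfiles (x g v : ι → ℝ) : Set (ι → ℝ) :=
  {k | IsLogConcave x k ∧ k ⬝ᵥ g = 1 ∧ k ⬝ᵥ v = 0}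

lemma continuous_dotProduct_right (w : ι → ℝ) : Continuous fun k : ι → ℝ => k ⬝ᵥ w :=
  continuous_id.dotProduct continuous_const

lemma isCompact_balancedProfiles (hg : ∀ i, 0 < g i) (v : ι → ℝ) :
    IsCompact (balancedProfiles x g v) := by
  refine (isCompact_univ_pi fun i => isCompact_Icc (a := 0) (b := 1 / g i)).of_isClosed_subset
    ((isClosed_setOf_isLogConcave x).inter
      ((isClosed_eq (continuous_dotProduct_right g) continuous_const).inter
        (isClosed_eq (continuous_dotProduct_right v) continuous_const))) ?_
  rintro k ⟨hk, hk1, -⟩ i -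
  refine ⟨hk.nonneg i, (le_div_iff₀ (hg i)).2 ?_⟩
  rw [← hk1]
  exact Finset.single_le_sum (f := fun j => k j * g j)
    (fun j _ => mul_nonneg (hk.nonneg j) (hg j).le) (Finset.mem_univ i)

lemma dotProduct_pos_of_ne_zero (hg : ∀ i, 0 < g i) (hk : ∀ i, 0 ≤ k i) (hk0 : k ≠ 0) :
    0 < k ⬝ᵥ g := by
  obtain ⟨i, hi⟩ := Function.ne_iff.1 hk0
  exact Finset.sum_pos' (fun j _ => mul_nonneg (hk j) (hg j).le)
    ⟨i, Finset.mem_univ i, mul_pos ((hk i).lt_of_ne' hi) (hg i)⟩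

lemma inv_smul_mem_balancedProfiles (hg : ∀ i, 0 < g i) (hk : IsLogConcave x k) (hk0 : k ≠ 0)
    (hkv : k ⬝ᵥ v = 0) : (k ⬝ᵥ g)⁻¹ • k ∈ balancedProfiles x g v := by
  have hpos := dotProduct_pos_of_ne_zero hg hk.nonneg hk0
  refine ⟨hk.const_mul (inv_nonneg.2 hpos.le), ?_, ?_⟩
  · rw [smul_dotProduct, smul_eq_mul, inv_mul_cancel₀ hpos.ne']
  · rw [smul_dotProduct, hkv, smul_zero]

lemma eq_smul_of_mem_extremePoints (hg : ∀ i, 0 < g i)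
    (hu : u ∈ (balancedProfiles x g v).extremePoints ℝ) (hk : IsLogConcave x k)
    (hk' : IsLogConcave x (u - k)) (hk0 : k ≠ 0) (hku : k ≠ u) (hkv : k ⬝ᵥ v = 0) :
    k = (k ⬝ᵥ g) • u := by
  obtain ⟨⟨-, hu1, huv⟩, hext⟩ := mem_extremePoints_iff_left.1 hu
  have hku' : u - k ≠ 0 := sub_ne_zero.2 hku.symm
  have hC := dotProduct_pos_of_ne_zero hg hk.nonneg hk0
  have hC' := dotProduct_pos_of_ne_zero hg hk'.nonneg hku'
  have := hext _ (inv_smul_mem_balancedProfiles hg hk hk0 hkv) _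
    (inv_smul_mem_balancedProfiles hg hk' hku' (by rw [sub_dotProduct, huv, hkv, sub_zero]))
    ⟨k ⬝ᵥ g, (u - k) ⬝ᵥ g, hC, hC', by rw [← add_dotProduct, add_sub_cancel, hu1],
      by rw [smul_inv_smul₀ hC.ne', smul_inv_smul₀ hC'.ne', add_sub_cancel]⟩
  rw [← this, smul_inv_smul₀ hC.ne']

lemma indicator_dotProduct_ne_zero (hg : ∀ i, 0 < g i)
    (hu : u ∈ (balancedProfiles x g v).extremePoints ℝ) {D : Set ℝ} (hD : Convex ℝ D)
    (hDc : Convex ℝ Dᶜ) {p q : ι} (hp : x p ∈ D) (hq : x q ∉ D) (hup : 0 < u p) (huq : 0 < u q) :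
    (x ⁻¹' D).indicator u ⬝ᵥ v ≠ 0 := by
  intro h
  have hk := hu.1.1.indicator hD
  set k := (x ⁻¹' D).indicator u with hk_def
  have hkp : k p = u p := Set.indicator_of_mem (s := x ⁻¹' D) hp u
  have hkq : k q = 0 := Set.indicator_of_notMem (s := x ⁻¹' D) hq u
  have hk0 : k ≠ 0 := fun h => hup.ne' (hkp ▸ congr_fun h p)
  have hk' : IsLogConcave x (u - k) := by
    rw [hk_def, ← Set.indicator_compl]
    exact hu.1.1.indicator hDc
  have hsmul := congr_fun (eq_smul_of_mem_extremePoints hg hu hk hk' hk0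
    (fun h => huq.ne' ((congr_fun h q).symm.trans hkq)) h) q
  rw [hkq, Pi.smul_apply, smul_eq_mul] at hsmul
  exact (mul_pos (dotProduct_pos_of_ne_zero hg hk.nonneg hk0) huq).ne hsmul

lemma tendsto_min_exp_atTop {a s : ℝ} (ha : 0 ≤ a) (hs : s ≠ 0) (z : ℝ) :
    Filter.Tendsto (fun b => min a (Real.exp (z + b * s))) Filter.atTop
      (nhds (if 0 < s then a else 0)) := by
  rcases hs.lt_or_gt with hs | hs
  · rw [if_neg hs.not_gt, ← min_eq_right ha]
    exact tendsto_const_nhds.min (Real.tendsto_exp_atBot.comp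
      (Filter.tendsto_atBot_add_const_left _ _ (Filter.tendsto_id.atTop_mul_const_of_neg hs)))
  · rw [if_pos hs]
    have := Real.tendsto_exp_atTop.comp (Filter.tendsto_atTop_add_const_left _ z
      (Filter.tendsto_id.atTop_mul_const hs))
    exact tendsto_const_nhds.congr' ((this.eventually_ge_atTop a).mono fun b hb =>
      (min_eq_left hb).symm)

lemma tendsto_min_exp_dotProduct_atTop {t : ℝ} (hu : ∀ i, 0 ≤ u i) (ht : t ∉ Set.range x)
    (v : ι → ℝ) (z : ℝ) :
    Filter.Tendsto (fun b => (fun j => min (u j) (Real.exp (z + b * (x j - t)))) ⬝ᵥ v)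
      Filter.atTop (nhds ((x ⁻¹' Set.Ioi t).indicator u ⬝ᵥ v)) := by
  refine tendsto_finsetSum _ fun j _ => Filter.Tendsto.mul_const _ ?_
  have := tendsto_min_exp_atTop (hu j) (sub_ne_zero.2 fun h => ht ⟨j, h⟩) z
  simpa only [Set.indicator, Set.mem_preimage, Set.mem_Ioi, sub_pos] using this

lemma tendsto_min_exp_dotProduct_atBot {t : ℝ} (hu : ∀ i, 0 ≤ u i) (ht : t ∉ Set.range x)
    (v : ι → ℝ) (z : ℝ) :
    Filter.Tendsto (fun b => (fun j => min (u j) (Real.exp (z + b * (x j - t)))) ⬝ᵥ v)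
      Filter.atBot (nhds ((x ⁻¹' Set.Iio t).indicator u ⬝ᵥ v)) := by
  have reflected := (tendsto_min_exp_dotProduct_atTop (x := -x) (t := -t) hu
    (fun ⟨j, hj⟩ => ht ⟨j, neg_injective hj⟩) v z).comp Filter.tendsto_neg_atBot_atTop
  have hpre : (-x) ⁻¹' Set.Ioi (-t) = x ⁻¹' Set.Iio t := by
    ext j
    simp
  rw [hpre] at reflected
  refine reflected.congr fun b => ?_
  simp only [Function.comp_apply, Pi.neg_apply, neg_sub_neg, neg_mul_comm, neg_sub]

lemma exists_min_exp_dotProduct_eq_zero (hg : ∀ i, 0 < g i)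
    (hu : u ∈ (balancedProfiles x g v).extremePoints ℝ) {p q : ι} {t : ℝ} (hp : x p < t)
    (hq : t < x q) (ht : t ∉ Set.range x) (hup : 0 < u p) (huq : 0 < u q) (z : ℝ) :
    ∃ b : ℝ, (fun j => min (u j) (Real.exp (z + b * (x j - t)))) ⬝ᵥ v = 0 := by
  set F : ℝ → ℝ := fun b => (fun j => min (u j) (Real.exp (z + b * (x j - t)))) ⬝ᵥ v
  have hF : Continuous F := by
    unfold F dotProduct
    fun_prop
  have hu0 := hu.1.1.nonneg
  have htop := tendsto_min_exp_dotProduct_atTop hu0 ht v z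
  have hbot := tendsto_min_exp_dotProduct_atBot hu0 ht v z
  have hne : (x ⁻¹' Set.Ioi t).indicator u ⬝ᵥ v ≠ 0 :=
    indicator_dotProduct_ne_zero hg hu (convex_Ioi t) (by simpa using convex_Iic t) hq hp.not_gt
      huq hup
  have hsum : (x ⁻¹' Set.Ioi t).indicator u ⬝ᵥ v + (x ⁻¹' Set.Iio t).indicator u ⬝ᵥ v = 0 := by
    rw [← add_dotProduct, ← hu.1.2.2]
    congr 1
    ext j
    rcases lt_or_gt_of_ne fun h => ht ⟨j, h⟩ with h | h <;> simp [Set.indicator, h, h.not_gt]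
  rcases hne.lt_or_gt with h | h
  · obtain ⟨b₁, hb₁⟩ := (htop.eventually_lt_const h).exists
    obtain ⟨b₂, hb₂⟩ := (hbot.eventually_const_lt (u := 0) (by linarith)).exists
    exact mem_range_of_exists_le_of_exists_ge hF ⟨b₁, hb₁.le⟩ ⟨b₂, hb₂.le⟩
  · obtain ⟨b₁, hb₁⟩ := (htop.eventually_const_lt h).exists
    obtain ⟨b₂, hb₂⟩ := (hbot.eventually_lt_const (u := 0) (by linarith)).exists
    exact mem_range_of_exists_le_of_exists_ge hF ⟨b₂, hb₂.le⟩ ⟨b₁, hb₁.le⟩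

lemma exists_exp_of_mem_extremePoints (hg : ∀ i, 0 < g i)
    (hu : u ∈ (balancedProfiles x g v).extremePoints ℝ) {p q : ι} (hpq : x p < x q)
    (hup : 0 < u p) (huq : 0 < u q) :
    ∃ r m : ℝ, 0 ≤ r ∧ ∀ j, 0 < u j → u j = r * Real.exp (m * x j) := by
  obtain ⟨t, ⟨hpt, htq⟩, ht⟩ := ((Set.Ioo_infinite hpq).sdiff (Set.finite_range x)).nonempty
  obtain ⟨z, hzp, hzq⟩ : ∃ z, Real.exp z < u p ∧ Real.exp z < u q := by
    have hmin : 0 < min (u p) (u q) / 2 := half_pos (lt_min hup huq)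
    have := half_lt_self (lt_min hup huq)
    exact ⟨Real.log (min (u p) (u q) / 2), by
      rw [Real.exp_log hmin]
      exact lt_min_iff.1 this⟩
  obtain ⟨b, hb⟩ := exists_min_exp_dotProduct_eq_zero hg hu hpt htq ht hup huq z
  have hk : IsLogConcave x fun j => min (u j) (Real.exp (z + b * (x j - t))) :=
    hu.1.1.min (.exp_affine x z b t)
  have hk_pos {j : ι} (hj : 0 < u j) : 0 < min (u j) (Real.exp (z + b * (x j - t))) :=
    lt_min hj (Real.exp_pos _)
  -- The cutting exponential is below `u` at whichever of `p`, `q` it decreases towards from `t`.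
  obtain ⟨i, hi, hlt⟩ : ∃ i, 0 < u i ∧ Real.exp (z + b * (x i - t)) < u i := by
    rcases le_total 0 b with hb0 | hb0
    · exact ⟨p, hup, (Real.exp_le_exp.2 (by nlinarith)).trans_lt hzp⟩
    · exact ⟨q, huq, (Real.exp_le_exp.2 (by nlinarith)).trans_lt hzq⟩
  have hsmul := congr_fun (eq_smul_of_mem_extremePoints hg hu hk (hu.1.1.sub_min_exp_affine z b t)
    (fun h => (hk_pos hup).ne' (congr_fun h p))
    (fun h => (min_lt_of_right_lt hlt).ne (congr_fun h i)) hb)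
  set k := fun j => min (u j) (Real.exp (z + b * (x j - t)))
  set r := k ⬝ᵥ g
  have hr0 : 0 < r :=
    dotProduct_pos_of_ne_zero hg hk.nonneg fun h => (hk_pos hup).ne' (congr_fun h p)
  have hr1 : r < 1 := by
    refine lt_of_mul_lt_mul_right ?_ hi.le
    rw [one_mul]
    exact (hsmul i).ge.trans_lt (min_lt_of_right_lt hlt)
  refine ⟨r⁻¹ * Real.exp (z - b * t), b, by positivity, fun j hj => ?_⟩
  have hkj : k j = Real.exp (z + b * (x j - t)) := by
    refine (min_choice _ _).resolve_left fun h => ?_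
    have : u j = r * u j := h.symm.trans (hsmul j)
    nlinarith
  rw [mul_assoc, ← Real.exp_add, eq_inv_mul_iff_mul_eq₀ hr0.ne']
  refine (hsmul j).symm.trans (hkj.trans ?_)
  ring_nf

lemma isNeedle_of_mem_extremePoints (hg : ∀ i, 0 < g i)
    (hu : u ∈ (balancedProfiles x g v).extremePoints ℝ) : IsNeedle x u := by
  obtain ⟨hlc, hu1, -⟩ := hu.1
  have hne : (Finset.univ.filter fun i => 0 < u i).Nonempty := by
    by_contra! h
    have hu0 : u = 0 := funext fun i => le_antisymm
      (not_lt.1 (Finset.filter_eq_empty_iff.1 h (Finset.mem_univ i))) (hlc.nonneg i)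
    simp [hu0] at hu1
  obtain ⟨p, hp, hpmin⟩ := Finset.exists_min_image _ x hne
  obtain ⟨q, hq, hqmax⟩ := Finset.exists_max_image _ x hne
  simp only [Finset.mem_filter, Finset.mem_univ, true_and] at hp hq hpmin hqmax
  suffices ∃ r m : ℝ, 0 ≤ r ∧ ∀ j, 0 < u j → u j = r * Real.exp (m * x j) by
    obtain ⟨r, m, hr, hrm⟩ := this
    refine ⟨x p, x q, r, m, hr, funext fun j => ?_⟩
    rcases (hlc.nonneg j).eq_or_lt with hj | hj
    · rw [Set.indicator_of_notMem, hj]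
      intro hjpq
      rw [Set.mem_preimage, ← segment_eq_Icc (hpmin q hq)] at hjpq
      exact hj.not_lt (hlc.pos_of_mem_segment hp hq hjpq)
    · rw [Set.indicator_of_mem (show j ∈ x ⁻¹' Set.Icc (x p) (x q) from ⟨hpmin j hj, hqmax j hj⟩),
        hrm j hj]
  rcases (hpmin q hq).eq_or_lt with hpq | hpq
  · refine ⟨u p, 0, hp.le, fun j hj => ?_⟩
    rw [hlc.eq_of_node_eq (le_antisymm (hpq ▸ hqmax j hj) (hpmin j hj))]
    simp
  · exact exists_exp_of_mem_extremePoints hg hu hpq hp hq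

end DiscreteLocalization

lemma exists_extremePoint_isMaxOn {ι : Type*} [Fintype ι] {S : Set (ι → ℝ)} (hS : IsCompact S)
    (hne : S.Nonempty) (b : ι → ℝ) : ∃ u ∈ S.extremePoints ℝ, ∀ k ∈ S, k ⬝ᵥ b ≤ u ⬝ᵥ b := by
  let l : StrongDual ℝ (ι → ℝ) := LinearMap.toContinuousLinearMap
    { toFun := fun k => k ⬝ᵥ b
      map_add' := fun k k' => add_dotProduct k k' b
      map_smul' := fun r k => smul_dotProduct r k b }
  have hexp : IsExposed ℝ S (l.toExposed S) := ContinuousLinearMap.toExposed.isExposed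
  obtain ⟨k, hk, hkmax⟩ := hS.exists_isMaxOn hne l.continuous.continuousOn
  obtain ⟨u, hu⟩ := (hexp.isCompact hS).extremePoints_nonempty ⟨k, hk, fun y hy => hkmax hy⟩
  exact ⟨u, hexp.isExtreme.extremePoints_subset_extremePoints hu, hu.1.2⟩

/-- The Kannan–Lovász–Simonovits localization lemma on finitely many nodes of the line. -/
theorem IsLogConcave.dotProduct_mul_dotProduct_le {ι : Type*} [Fintype ι] {x a b g h : ι → ℝ}
    {c : ℝ} (ha : ∀ i, 0 ≤ a i) (hg : ∀ i, 0 < g i)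
    (H : ∀ u, IsNeedle x u → (u ⬝ᵥ a) * (u ⬝ᵥ b) ≤ c * (u ⬝ᵥ g) ^ 2) (hh : IsLogConcave x h) :
    (h ⬝ᵥ a) * (h ⬝ᵥ b) ≤ c * (h ⬝ᵥ g) ^ 2 := by
  rcases eq_or_ne h 0 with rfl | hne
  · simp
  have hC := dotProduct_pos_of_ne_zero hg hh.nonneg hne
  set s := (h ⬝ᵥ a) / (h ⬝ᵥ g)
  have hA : h ⬝ᵥ a = s * (h ⬝ᵥ g) := (div_mul_cancel₀ _ hC.ne').symm
  have hs0 : 0 ≤ s :=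
    div_nonneg (Finset.sum_nonneg fun j _ => mul_nonneg (hh.nonneg j) (ha j)) hC.le
  have dotProduct_sub_smul (k : ι → ℝ) : k ⬝ᵥ (a - s • g) = k ⬝ᵥ a - s * (k ⬝ᵥ g) := by
    rw [dotProduct_sub, dotProduct_smul, smul_eq_mul]
  have hmem : (h ⬝ᵥ g)⁻¹ • h ∈ balancedProfiles x g (a - s • g) :=
    inv_smul_mem_balancedProfiles hg hh hne (by rw [dotProduct_sub_smul, hA, sub_self])
  obtain ⟨u, hu, hmax⟩ := exists_extremePoint_isMaxOn (isCompact_balancedProfiles hg _) ⟨_, hmem⟩ b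
  have huneedle := H u (isNeedle_of_mem_extremePoints hg hu)
  obtain ⟨-, hug, hua⟩ := hu.1
  rw [dotProduct_sub_smul, hug, mul_one, sub_eq_zero] at hua
  rw [hua, hug, one_pow, mul_one] at huneedle
  have hB : h ⬝ᵥ b ≤ (h ⬝ᵥ g) * (u ⬝ᵥ b) := by
    have := hmax _ hmem
    rwa [smul_dotProduct, smul_eq_mul, inv_mul_le_iff₀ hC] at this
  calc (h ⬝ᵥ a) * (h ⬝ᵥ b) ≤ (s * (h ⬝ᵥ g)) * ((h ⬝ᵥ g) * (u ⬝ᵥ b)) := by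
        rw [hA]
        exact mul_le_mul_of_nonneg_left hB (mul_nonneg hs0 hC.le)
    _ = s * (u ⬝ᵥ b) * (h ⬝ᵥ g) ^ 2 := by ring
    _ ≤ c * (h ⬝ᵥ g) ^ 2 := mul_le_mul_of_nonneg_right huneedle (sq_nonneg _)

/-! ### Localization on an interval -/

/-- The needle inequality, the inequality to be localized: it is imposed on exponentials on
subintervals of `[-R, R]`, for three weights `w 0`, `w 1`, `w 2`. -/
def NeedleBound (R c : ℝ) (w : Fin 3 → ℝ → ℝ) : Prop :=
  ∀ ℓ u γ : ℝ, -R ≤ ℓ → ℓ ≤ u → u ≤ R →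
    (∫ t in ℓ..u, Real.exp (γ * t) * w 0 t) * (∫ t in ℓ..u, Real.exp (γ * t) * w 1 t) ≤
      c * (∫ t in ℓ..u, Real.exp (γ * t) * w 2 t) ^ 2

/-- Harnack-type control of a weight on `[-R, R]`: its values at points at distance at most `δ`
differ by a factor at most `K`. -/
def HarnackBound (R δ K : ℝ) (w : ℝ → ℝ) : Prop :=
  ∀ s ∈ Set.Icc (-R) R, ∀ t ∈ Set.Icc (-R) R, |s - t| ≤ δ → w s ≤ K * w t

lemma eventually_harnackBound {w : ℝ → ℝ} (hw : Continuous w) (hw0 : ∀ t, 0 < w t) (R : ℝ) {K : ℝ}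
    (hK : 1 < K) : ∀ᶠ δ in nhds 0, HarnackBound R δ K w := by
  have huc := (isCompact_Icc (a := -R) (b := R)).uniformContinuousOn_of_continuous
    (hw.log fun t => (hw0 t).ne').continuousOn
  obtain ⟨δ₀, hδ₀, h⟩ := Metric.uniformContinuousOn_iff.1 huc _ (Real.log_pos hK)
  filter_upwards [eventually_lt_nhds hδ₀] with δ hδ s hs t ht hst
  have := (le_abs_self _).trans_lt (h s hs t ht (hst.trans_lt hδ))
  rw [← Real.log_le_log_iff (hw0 s) (mul_pos (by positivity) (hw0 t)),
    Real.log_mul (by positivity) (hw0 t).ne']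
  linarith

/-- The `j`-th point of the uniform subdivision of `[-R, R]` into `N` cells. -/
noncomputable def gridPoint (R : ℝ) (N j : ℕ) : ℝ := -R + j * (2 * R / N)

/-- The integral of `k` over the `j`-th cell of the uniform subdivision of `[-R, R]`. -/
noncomputable def cellIntegral (R : ℝ) (N : ℕ) (k : ℝ → ℝ) (j : Fin N) : ℝ :=
  ∫ t in gridPoint R N j..gridPoint R N (j + 1), k t

section Grid

variable {R : ℝ} {N : ℕ}

lemma gridPoint_add_one (R : ℝ) (N j : ℕ) :
    gridPoint R N (j + 1) = gridPoint R N j + 2 * R / N := by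
  simp only [gridPoint, Nat.cast_add, Nat.cast_one]
  ring

lemma gridPoint_mono (hR : 0 ≤ R) : Monotone (gridPoint R N) :=
  fun i j hij => by unfold gridPoint; gcongr

lemma gridPoint_zero : gridPoint R N 0 = -R := by simp [gridPoint]

lemma gridPoint_self (hN : N ≠ 0) : gridPoint R N N = R := by
  unfold gridPoint
  field_simp
  ring

lemma gridPoint_mem_Icc (hR : 0 ≤ R) {j : ℕ} (hj : j ≤ N) :
    gridPoint R N j ∈ Set.Icc (-R) R := by
  rcases eq_or_ne N 0 with rfl | hN
  · simpa [gridPoint] using hR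
  · exact ⟨gridPoint_zero.ge.trans (gridPoint_mono hR (Nat.zero_le j)),
      (gridPoint_mono hR hj).trans_eq (gridPoint_self hN)⟩

lemma cell_subset (hR : 0 ≤ R) (j : Fin N) :
    Set.Icc (gridPoint R N j) (gridPoint R N (j + 1)) ⊆ Set.Icc (-R) R :=
  Set.Icc_subset_Icc (gridPoint_mem_Icc hR j.2.le).1 (gridPoint_mem_Icc hR j.2).2

lemma cell_uIcc_subset (hR : 0 ≤ R) (j : Fin N) :
    Set.uIcc (gridPoint R N j) (gridPoint R N (j + 1)) ⊆ Set.uIcc (-R) R := by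
  rw [Set.uIcc_of_le (gridPoint_mono hR (Nat.le_succ j)), Set.uIcc_of_le (by linarith)]
  exact cell_subset hR j

lemma cellIntegral_nonneg (hR : 0 ≤ R) {k : ℝ → ℝ} (hk : ∀ t, 0 ≤ k t) (j : Fin N) :
    0 ≤ cellIntegral R N k j :=
  intervalIntegral.integral_nonneg (gridPoint_mono hR (Nat.le_succ j)) fun t _ => hk t

lemma sum_cellIntegral (hR : 0 ≤ R) (hN : N ≠ 0) {k : ℝ → ℝ}
    (hk : IntervalIntegrable k volume (-R) R) :
    ∑ j, cellIntegral R N k j = ∫ t in (-R)..R, k t := by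
  have := sum_integral_adjacent_intervals (a := gridPoint R N) (n := N)
    fun j hj => hk.mono_set (cell_uIcc_subset hR ⟨j, hj⟩)
  rwa [gridPoint_zero, gridPoint_self hN, Finset.sum_range] at this

lemma integral_mul_le_cellIntegral_dotProduct (hR : 0 ≤ R) (hN : N ≠ 0) {k w : ℝ → ℝ} {K : ℝ}
    (hk : IntervalIntegrable k volume (-R) R) (hk0 : ∀ t, 0 ≤ k t) (hw : Continuous w)
    (hKw : HarnackBound R (2 * R / N) K w) :
    ∫ t in (-R)..R, k t * w t ≤ K * (cellIntegral R N k ⬝ᵥ fun j => w (gridPoint R N j)) := by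
  have hkw := hk.mul_continuousOn hw.continuousOn
  rw [← sum_cellIntegral hR hN hkw, dotProduct, Finset.mul_sum]
  refine Finset.sum_le_sum fun j _ => ?_
  have hle := gridPoint_mono (R := R) (N := N) hR (Nat.le_succ j)
  rw [cellIntegral, cellIntegral, mul_left_comm, ← intervalIntegral.integral_mul_const]
  refine integral_mono_on hle (hkw.mono_set (cell_uIcc_subset hR j))
    ((hk.mono_set (cell_uIcc_subset hR j)).mul_const _) fun t ht => ?_
  refine mul_le_mul_of_nonneg_left (hKw t (cell_subset hR j ht) _
    (cell_subset hR j ⟨le_rfl, hle⟩) ?_) (hk0 t)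
  rw [abs_of_nonneg (sub_nonneg.2 ht.1)]
  linarith [ht.2, gridPoint_add_one R N j]

lemma cellIntegral_dotProduct_le_integral_mul (hR : 0 ≤ R) (hN : N ≠ 0) {k w : ℝ → ℝ} {K : ℝ}
    (hk : IntervalIntegrable k volume (-R) R) (hk0 : ∀ t, 0 ≤ k t) (hw : Continuous w)
    (hKw : HarnackBound R (2 * R / N) K w) :
    (cellIntegral R N k ⬝ᵥ fun j => w (gridPoint R N j)) ≤ K * ∫ t in (-R)..R, k t * w t := by
  have hkw := hk.mul_continuousOn hw.continuousOn
  rw [← sum_cellIntegral hR hN hkw, dotProduct, Finset.mul_sum]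
  refine Finset.sum_le_sum fun j _ => ?_
  have hle := gridPoint_mono (R := R) (N := N) hR (Nat.le_succ j)
  rw [cellIntegral, cellIntegral, ← intervalIntegral.integral_mul_const,
    ← intervalIntegral.integral_const_mul]
  refine integral_mono_on hle ((hk.mono_set (cell_uIcc_subset hR j)).mul_const _)
    ((hkw.mono_set (cell_uIcc_subset hR j)).const_mul _) fun t ht => ?_
  rw [mul_left_comm]
  refine mul_le_mul_of_nonneg_left (hKw _ (cell_subset hR j ⟨le_rfl, hle⟩) t
    (cell_subset hR j ht) ?_) (hk0 t)
  rw [abs_sub_comm, abs_of_nonneg (sub_nonneg.2 ht.1)]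
  linarith [ht.2, gridPoint_add_one R N j]

lemma isLogConcave_cellIntegral {h : ℝ → ℝ} (hh : IsLogConcave id h) (hint : Integrable h)
    (hbdd : BddAbove (Set.range h)) (hR : 0 ≤ R) (N : ℕ) :
    IsLogConcave (fun j : Fin N => gridPoint R N j) (cellIntegral R N h) := by
  set D : Set (ℝ × ℝ) := Prod.snd ⁻¹' Set.Ioc 0 (2 * R / N)
  have hD : Convex ℝ D := (convex_Ioc 0 (2 * R / N)).linear_preimage (LinearMap.snd ℝ ℝ ℝ)
  have hF : IsLogConcave id (D.indicator fun p => h (p.1 + p.2)) :=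
    (hh.comp_affineMap (LinearMap.fst ℝ ℝ ℝ + LinearMap.snd ℝ ℝ ℝ).toAffineMap).indicator hD
  have hsec (y : ℝ) : (fun t => D.indicator (fun p => h (p.1 + p.2)) (y, t)) =
      (Set.Ioc 0 (2 * R / N)).indicator fun t => h (y + t) := rfl
  have key := hF.marginal (fun y => ?_) fun y => ?_
  · have hcell : cellIntegral R N h =
        (fun y => ∫ t, D.indicator (fun p => h (p.1 + p.2)) (y, t)) ∘
          fun j : Fin N => gridPoint R N j := by
      funext j
      rw [Function.comp_apply, hsec, MeasureTheory.integral_indicator measurableSet_Ioc,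
        ← integral_of_le (by positivity), intervalIntegral.integral_comp_add_left, add_zero,
        ← gridPoint_add_one, cellIntegral]
    rw [hcell]
    exact key.reindex _
  · rw [hsec]
    exact (hint.comp_add_left y).indicator measurableSet_Ioc
  · obtain ⟨M, hM⟩ := hbdd
    refine ⟨M, ?_⟩
    rintro _ ⟨t, rfl⟩
    exact Set.indicator_apply_le' (fun _ => hM ⟨_, rfl⟩) fun _ => (hh.nonneg 0).trans (hM ⟨0, rfl⟩)

lemma cellIntegral_indicator_Ioc (hR : 0 ≤ R) (k : ℝ → ℝ) (i i' j : Fin N) :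
    cellIntegral R N
        ((Set.Ioc (gridPoint R N i) (gridPoint R N (i' + 1))).indicator k) j =
      (Set.Icc i i').indicator (cellIntegral R N k) j := by
  have hcell := gridPoint_mono (R := R) (N := N) hR (Nat.le_succ j)
  rw [cellIntegral, integral_of_le hcell, setIntegral_indicator measurableSet_Ioc,
    Set.Ioc_inter_Ioc]
  by_cases hj : j ∈ Set.Icc i i'
  · rw [Set.indicator_of_mem hj, sup_eq_left.2 (gridPoint_mono hR hj.1),
      inf_eq_left.2 (gridPoint_mono hR (Nat.succ_le_succ hj.2)), cellIntegral, integral_of_le hcell]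
  · rw [Set.indicator_of_notMem hj, Set.Ioc_eq_empty_of_le, setIntegral_empty]
    rcases not_and_or.1 hj with hj | hj
    · exact inf_le_left.trans ((gridPoint_mono hR (not_le.1 hj)).trans le_sup_right)
    · exact inf_le_right.trans ((gridPoint_mono hR (not_le.1 hj)).trans le_sup_left)

lemma cellIntegral_exp (R : ℝ) (N : ℕ) (r m : ℝ) (j : Fin N) :
    cellIntegral R N (fun t => r * Real.exp (m * t)) j =
      r * (∫ t in 0..2 * R / N, Real.exp (m * t)) * Real.exp (m * gridPoint R N j) := by
  have := intervalIntegral.integral_comp_add_left (a := 0) (b := 2 * R / N)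
    (fun t => Real.exp (m * t)) (gridPoint R N j)
  rw [add_zero, ← gridPoint_add_one] at this
  rw [cellIntegral, intervalIntegral.integral_const_mul, ← this]
  simp only [mul_add, Real.exp_add, intervalIntegral.integral_const_mul]
  ring

lemma IsNeedle.exists_cellIntegral_eq (hR : 0 < R) {u : Fin N → ℝ}
    (hu : IsNeedle (fun j : Fin N => gridPoint R N j) u) :
    ∃ a b r γ : ℝ, -R ≤ a ∧ a ≤ b ∧ b ≤ R ∧ 0 ≤ r ∧
      u = cellIntegral R N ((Set.Ioc a b).indicator fun t => r * Real.exp (γ * t)) := by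
  obtain ⟨p, q, r, m, hr, rfl⟩ := hu
  set S : Finset (Fin N) := {j | gridPoint R N j ∈ Set.Icc p q} with hS
  have mem_S (j : Fin N) : j ∈ S ↔ gridPoint R N j ∈ Set.Icc p q := by simp [hS]
  rcases S.eq_empty_or_nonempty with hempty | hne
  · refine ⟨-R, R, 0, 0, le_rfl, by linarith, le_rfl, le_rfl, funext fun j => ?_⟩
    rw [Set.indicator_of_notMem]
    · simp [cellIntegral]
    · exact fun hj => Finset.notMem_empty j (hempty ▸ (mem_S j).2 hj)
  have hmin := (mem_S _).1 (S.min'_mem hne)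
  have hmax := (mem_S _).1 (S.max'_mem hne)
  set i := S.min' hne
  set i' := S.max' hne
  have hSIcc : (fun j : Fin N => gridPoint R N j) ⁻¹' Set.Icc p q = Set.Icc i i' :=
    Set.ext fun j => ⟨fun hj => ⟨S.min'_le j ((mem_S j).2 hj), S.le_max' j ((mem_S j).2 hj)⟩,
      fun hj => ⟨hmin.1.trans (gridPoint_mono hR.le hj.1),
        (gridPoint_mono hR.le hj.2).trans hmax.2⟩⟩
  have hii' : (i : ℕ) ≤ i' := S.min'_le _ (S.max'_mem hne)
  have hN : N ≠ 0 := i.pos.ne'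
  have hκ : 0 < ∫ t in 0..2 * R / N, Real.exp (m * t) :=
    intervalIntegral_pos_of_pos (Continuous.intervalIntegrable (by fun_prop) _ _)
      (fun t => Real.exp_pos _) (by positivity)
  refine ⟨gridPoint R N i, gridPoint R N (i' + 1), r / ∫ t in 0..2 * R / N, Real.exp (m * t), m,
    (gridPoint_mem_Icc hR.le i.2.le).1, gridPoint_mono hR.le (hii'.trans (Nat.le_succ _)),
    (gridPoint_mem_Icc hR.le i'.2).2, by positivity, funext fun j => ?_⟩
  simp only [cellIntegral_indicator_Ioc hR.le, hSIcc, Set.indicator, cellIntegral_exp,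
    div_mul_cancel₀ _ hκ.ne']

lemma integral_indicator_Ioc_mul {a b : ℝ} (ha : -R ≤ a) (hab : a ≤ b) (hb : b ≤ R)
    (k w : ℝ → ℝ) :
    ∫ t in (-R)..R, (Set.Ioc a b).indicator k t * w t = ∫ t in a..b, k t * w t := by
  simp only [← Set.indicator_mul_left]
  rw [integral_of_le (ha.trans (hab.trans hb)), integral_of_le hab,
    setIntegral_indicator measurableSet_Ioc, Set.inter_eq_right.2 (Set.Ioc_subset_Ioc ha hb)]

variable {w : Fin 3 → ℝ → ℝ} {c K : ℝ}

lemma IsNeedle.dotProduct_mul_dotProduct_le (hR : 0 < R) (hN : N ≠ 0) (hc : 0 ≤ c) (hK : 0 ≤ K)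
    (hw : ∀ i, Continuous (w i)) (hw0 : ∀ i t, 0 ≤ w i t)
    (hKw : ∀ i, HarnackBound R (2 * R / N) K (w i)) (H : NeedleBound R c w) {u : Fin N → ℝ}
    (hu : IsNeedle (fun j : Fin N => gridPoint R N j) u) :
    (u ⬝ᵥ fun j => w 0 (gridPoint R N j)) * (u ⬝ᵥ fun j => w 1 (gridPoint R N j)) ≤
      K ^ 4 * c * (u ⬝ᵥ fun j => w 2 (gridPoint R N j)) ^ 2 := by
  obtain ⟨a, b, r, γ, ha, hab, hb, hr, rfl⟩ := hu.exists_cellIntegral_eq hR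
  set k := (Set.Ioc a b).indicator fun t => r * Real.exp (γ * t)
  have hk0 (t) : 0 ≤ k t := Set.indicator_nonneg (fun t _ => by positivity) t
  have hk : IntervalIntegrable k volume (-R) R := by
    rw [intervalIntegrable_iff]
    exact (Continuous.integrableOn_uIoc (by fun_prop)).indicator measurableSet_Ioc
  have hint (i) : ∫ t in (-R)..R, k t * w i t = r * ∫ t in a..b, Real.exp (γ * t) * w i t := by
    rw [integral_indicator_Ioc_mul ha hab hb, ← intervalIntegral.integral_const_mul]
    simp only [mul_assoc]
  have hle (i) := cellIntegral_dotProduct_le_integral_mul hR.le hN hk hk0 (hw i) (hKw i)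
  have hle₂ := integral_mul_le_cellIntegral_dotProduct hR.le hN hk hk0 (hw 2) (hKw 2)
  have hdot (i) : 0 ≤ cellIntegral R N k ⬝ᵥ fun j => w i (gridPoint R N j) :=
    dotProduct_nonneg_of_nonneg (cellIntegral_nonneg hR.le hk0) fun j => hw0 i _
  have hI (i) : 0 ≤ ∫ t in (-R)..R, k t * w i t :=
    intervalIntegral.integral_nonneg (by linarith) fun t _ => mul_nonneg (hk0 t) (hw0 i t)
  calc _ ≤ (K * ∫ t in (-R)..R, k t * w 0 t) * (K * ∫ t in (-R)..R, k t * w 1 t) :=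
        mul_le_mul (hle 0) (hle 1) (hdot 1) (mul_nonneg hK (hI 0))
    _ = K ^ 2 * r ^ 2 * ((∫ t in a..b, Real.exp (γ * t) * w 0 t) *
          ∫ t in a..b, Real.exp (γ * t) * w 1 t) := by rw [hint, hint]; ring
    _ ≤ K ^ 2 * r ^ 2 * (c * (∫ t in a..b, Real.exp (γ * t) * w 2 t) ^ 2) :=
        mul_le_mul_of_nonneg_left (H a b γ ha hab hb) (by positivity)
    _ = K ^ 2 * c * (∫ t in (-R)..R, k t * w 2 t) ^ 2 := by rw [hint]; ring
    _ ≤ K ^ 2 * c * (K * (cellIntegral R N k ⬝ᵥ fun j => w 2 (gridPoint R N j))) ^ 2 := by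
        have := hI 2
        gcongr
    _ = _ := by ring

/-- A factor `K ^ 4` is lost in discretizing the needle inequality, and another one in discretizing
`h`. -/
lemma IsLogConcave.integral_mul_integral_le_of_harnackBound (hR : 0 < R) (hN : N ≠ 0)
    (hc : 0 ≤ c) (hK : 0 ≤ K) (hw : ∀ i, Continuous (w i)) (hw0 : ∀ i t, 0 < w i t)
    (hKw : ∀ i, HarnackBound R (2 * R / N) K (w i)) (H : NeedleBound R c w) {h : ℝ → ℝ}
    (hh : IsLogConcave id h) (hint : Integrable h) (hbdd : BddAbove (Set.range h)) :
    (∫ t in (-R)..R, h t * w 0 t) * (∫ t in (-R)..R, h t * w 1 t) ≤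
      K ^ 8 * c * (∫ t in (-R)..R, h t * w 2 t) ^ 2 := by
  set D : Fin 3 → ℝ := fun i => cellIntegral R N h ⬝ᵥ fun j => w i (gridPoint R N j)
  have hle (i) : ∫ t in (-R)..R, h t * w i t ≤ K * D i :=
    integral_mul_le_cellIntegral_dotProduct hR.le hN hint.intervalIntegrable hh.nonneg (hw i)
      (hKw i)
  have hle₂ : D 2 ≤ K * ∫ t in (-R)..R, h t * w 2 t :=
    cellIntegral_dotProduct_le_integral_mul hR.le hN hint.intervalIntegrable hh.nonneg (hw 2)
      (hKw 2)
  have hD0 (i) : 0 ≤ D i :=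
    dotProduct_nonneg_of_nonneg (cellIntegral_nonneg hR.le hh.nonneg) fun j => (hw0 i _).le
  have hI (i) : 0 ≤ ∫ t in (-R)..R, h t * w i t :=
    intervalIntegral.integral_nonneg (by linarith) fun t _ => mul_nonneg (hh.nonneg t) (hw0 i t).le
  have hdiscrete : D 0 * D 1 ≤ K ^ 4 * c * D 2 ^ 2 :=
    (isLogConcave_cellIntegral hh hint hbdd hR.le N).dotProduct_mul_dotProduct_le
      (fun j => (hw0 0 _).le) (fun j => hw0 2 _) fun u hu =>
        hu.dotProduct_mul_dotProduct_le hR hN hc hK hw (fun i t => (hw0 i t).le) hKw H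
  calc _ ≤ (K * D 0) * (K * D 1) :=
        mul_le_mul (hle 0) (hle 1) (hI 1) (mul_nonneg hK (hD0 0))
    _ = K ^ 2 * (D 0 * D 1) := by ring
    _ ≤ K ^ 2 * (K ^ 4 * c * D 2 ^ 2) := by gcongr
    _ ≤ K ^ 2 * (K ^ 4 * c * (K * ∫ t in (-R)..R, h t * w 2 t) ^ 2) := by
        have := hD0 2
        gcongr
    _ = _ := by ring

end Grid

theorem NeedleBound.integral_mul_integral_le {R c : ℝ} {w : Fin 3 → ℝ → ℝ}
    (H : NeedleBound R c w) (hR : 0 < R) (hc : 0 ≤ c) (hw : ∀ i, Continuous (w i))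
    (hw0 : ∀ i t, 0 < w i t) {h : ℝ → ℝ} (hh : IsLogConcave id h) (hint : Integrable h)
    (hbdd : BddAbove (Set.range h)) :
    (∫ t in (-R)..R, h t * w 0 t) * (∫ t in (-R)..R, h t * w 1 t) ≤
      c * (∫ t in (-R)..R, h t * w 2 t) ^ 2 := by
  have hmesh : Filter.Tendsto (fun N : ℕ => 2 * R / N) Filter.atTop (nhds 0) :=
    tendsto_const_div_atTop_nhds_zero_nat _
  have hK {K : ℝ} (hK : 1 < K) :
      (∫ t in (-R)..R, h t * w 0 t) * (∫ t in (-R)..R, h t * w 1 t) ≤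
        K ^ 8 * c * (∫ t in (-R)..R, h t * w 2 t) ^ 2 := by
    obtain ⟨N, hKw, hN⟩ := ((hmesh.eventually <| Filter.eventually_all.2 fun i =>
      eventually_harnackBound (hw i) (hw0 i) R hK).and (Filter.eventually_ne_atTop 0)).exists
    exact hh.integral_mul_integral_le_of_harnackBound hR hN hc (by positivity) hw hw0 hKw H hint
      hbdd
  have hcont : Filter.Tendsto (fun K : ℝ => K ^ 8 * c * (∫ t in (-R)..R, h t * w 2 t) ^ 2)
      (nhdsWithin 1 (Set.Ioi 1)) (nhds (1 ^ 8 * c * (∫ t in (-R)..R, h t * w 2 t) ^ 2)) :=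
    Continuous.continuousWithinAt (by fun_prop)
  rw [one_pow, one_mul] at hcont
  exact ge_of_tendsto hcont (Filter.eventually_of_mem self_mem_nhdsWithin fun K => hK)

/-! ### Bisection in the plane -/

/-- The coordinate of a point of the plane in the direction of angle `θ`. -/
noncomputable def planeProj (θ : ℝ) : ℝ × ℝ →L[ℝ] ℝ :=
  Real.cos θ • ContinuousLinearMap.fst ℝ ℝ ℝ + Real.sin θ • ContinuousLinearMap.snd ℝ ℝ ℝ

/-- The closed half-plane bounded by the line through `q` with inner normal of angle `θ`. -/
def halfPlane (θ : ℝ) (q : ℝ × ℝ) : Set (ℝ × ℝ) := {y | planeProj θ q ≤ planeProj θ y}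

lemma planeProj_apply (θ : ℝ) (y : ℝ × ℝ) :
    planeProj θ y = Real.cos θ * y.1 + Real.sin θ * y.2 := rfl

lemma planeProj_add_pi (θ : ℝ) (y : ℝ × ℝ) : planeProj (θ + Real.pi) y = -planeProj θ y := by
  simp only [planeProj_apply, Real.cos_add_pi, Real.sin_add_pi]
  ring

lemma continuous_planeProj_left (y : ℝ × ℝ) : Continuous fun θ => planeProj θ y := by
  simp only [planeProj_apply]
  fun_prop

lemma planeProj_surjective (θ : ℝ) : Function.Surjective (planeProj θ) := fun s =>
  ⟨(s * Real.cos θ, s * Real.sin θ), by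
    rw [planeProj_apply]
    linear_combination s * Real.cos_sq_add_sin_sq θ⟩

lemma isClosed_halfPlane (θ : ℝ) (q : ℝ × ℝ) : IsClosed (halfPlane θ q) :=
  isClosed_Ici.preimage (planeProj θ).continuous

lemma convex_halfPlane (θ : ℝ) (q : ℝ × ℝ) : Convex ℝ (halfPlane θ q) :=
  (convex_Ici _).linear_preimage (planeProj θ).toLinearMap

lemma notMem_interior_halfPlane (θ : ℝ) (q : ℝ × ℝ) : q ∉ interior (halfPlane θ q) := by
  have hopen : IsOpenMap (planeProj θ) := (planeProj θ).isOpenMap (planeProj_surjective θ)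
  change q ∉ interior (planeProj θ ⁻¹' Set.Ici (planeProj θ q))
  rw [← hopen.preimage_interior_eq_interior_preimage (planeProj θ).continuous, interior_Ici]
  exact lt_irrefl (planeProj θ q)

lemma exists_planeProj_eq_of_interior_eq_empty {T : Set (ℝ × ℝ)} (hT : Convex ℝ T)
    (hi : interior T = ∅) : ∃ θ, ∀ y ∈ T, ∀ z ∈ T, planeProj θ y = planeProj θ z := by
  rcases T.eq_empty_or_nonempty with rfl | hne
  · exact ⟨0, by simp⟩
  have hspan : vectorSpan ℝ T < ⊤ := lt_top_iff_ne_top.2 fun h =>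
    (hT.interior_nonempty_iff_affineSpan_eq_top.2 <|
      (AffineSubspace.affineSpan_eq_top_iff_vectorSpan_eq_top_of_nonempty ℝ _ _ hne).2 h).ne_empty
        hi
  obtain ⟨f, hf0, hf⟩ := Submodule.exists_le_ker_of_lt_top _ hspan
  set z : ℂ := ⟨f (1, 0), f (0, 1)⟩
  have hfz (y : ℝ × ℝ) : f y = ‖z‖ * planeProj z.arg y := by
    have hy : y = y.1 • ((1, 0) : ℝ × ℝ) + y.2 • ((0, 1) : ℝ × ℝ) := by ext <;> simp
    conv_lhs => rw [hy, map_add, map_smul, map_smul, smul_eq_mul, smul_eq_mul]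
    rw [planeProj_apply, mul_add, ← mul_assoc, ← mul_assoc, Complex.norm_mul_cos_arg,
      Complex.norm_mul_sin_arg]
    ring
  have hz0 : ‖z‖ ≠ 0 := fun h => hf0 (LinearMap.ext fun y => by simp [hfz, h])
  refine ⟨z.arg, fun y hy y' hy' => sub_eq_zero.1 ?_⟩
  have := hf (vsub_mem_vectorSpan ℝ hy hy')
  rwa [LinearMap.mem_ker, hfz, mul_eq_zero, or_iff_right hz0, vsub_eq_sub, map_sub] at this

section Bisection

variable {X : Type*} [MeasurableSpace X]

/-- The image of `μ` under `π` gives zero mass to every line of the plane. -/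
def NullOnLines (μ : Measure X) (π : X → ℝ × ℝ) : Prop :=
  ∀ θ d, μ {x | planeProj θ (π x) = d} = 0

/-- A closed convex planar region over which the localization procedure can be continued: `F₁` has
integral zero and `F₂` has positive integral. -/
structure IsBalancedRegion (μ : Measure X) (π : X → ℝ × ℝ) (F₁ F₂ : X → ℝ) (S : Set (ℝ × ℝ)) :
    Prop where
  convex : Convex ℝ S
  isClosed : IsClosed S
  integral_eq_zero : ∫ x in π ⁻¹' S, F₁ x ∂μ = 0
  integral_pos : 0 < ∫ x in π ⁻¹' S, F₂ x ∂μ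

variable {μ : Measure X} {π : X → ℝ × ℝ} {F F₁ F₂ : X → ℝ} {S : Set (ℝ × ℝ)}

lemma NullOnLines.restrict (hnull : NullOnLines μ π) (s : Set X) :
    NullOnLines (μ.restrict s) π :=
  fun θ d => nonpos_iff_eq_zero.1 ((Measure.restrict_apply_le _ _).trans_eq (hnull θ d))

lemma NullOnLines.ae_ne (hnull : NullOnLines μ π) (θ d : ℝ) :
    ∀ᵐ x ∂μ, planeProj θ (π x) ≠ d := by
  simpa only [ae_iff, ne_eq, not_not] using hnull θ d

lemma setIntegral_halfPlane_add (hπ : Measurable π) (hnull : NullOnLines μ π)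
    (hF : Integrable F μ) (θ : ℝ) (q : ℝ × ℝ) :
    (∫ x in π ⁻¹' halfPlane θ q, F x ∂μ) + (∫ x in π ⁻¹' halfPlane (θ + Real.pi) q, F x ∂μ) =
      ∫ x, F x ∂μ := by
  rw [← integral_add_compl (hπ (isClosed_halfPlane θ q).measurableSet) hF]
  congr 1
  refine setIntegral_congr_set ?_
  filter_upwards [hnull.ae_ne θ (planeProj θ q)] with x hx
  refine propext ?_
  change planeProj (θ + Real.pi) q ≤ planeProj (θ + Real.pi) (π x) ↔
    ¬ planeProj θ q ≤ planeProj θ (π x)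
  rw [planeProj_add_pi, planeProj_add_pi, neg_le_neg_iff, not_le]
  exact ⟨fun h => h.lt_of_ne hx, le_of_lt⟩

lemma continuous_setIntegral_halfPlane (hπ : Measurable π) (hnull : NullOnLines μ π)
    (hF : Integrable F μ) (q : ℝ × ℝ) :
    Continuous fun θ => ∫ x in π ⁻¹' halfPlane θ q, F x ∂μ := by
  have hms (θ : ℝ) : MeasurableSet (π ⁻¹' halfPlane θ q) :=
    hπ (isClosed_halfPlane θ q).measurableSet
  simp only [← MeasureTheory.integral_indicator (hms _)]
  refine continuous_iff_continuousAt.2 fun θ => continuousAt_of_dominated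
    (.of_forall fun θ => hF.aestronglyMeasurable.indicator (hms θ))
    (.of_forall fun θ => .of_forall fun x => norm_indicator_le_norm_self _ _) hF.norm ?_
  filter_upwards [hnull.ae_ne θ (planeProj θ q)] with x hx
  have hcont (y : ℝ × ℝ) := (continuous_planeProj_left y).continuousAt (x := θ)
  rcases lt_or_gt_of_ne hx with hx | hx
  · refine (continuousAt_const (y := (0 : ℝ))).congr ?_
    filter_upwards [(hcont _).eventually_lt (hcont _) hx] with θ' h'
    exact (Set.indicator_of_notMem (show x ∉ π ⁻¹' halfPlane θ' q from not_le.2 h') _).symm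
  · refine (continuousAt_const (y := F x)).congr ?_
    filter_upwards [(hcont _).eventually_lt (hcont _) hx] with θ' h'
    exact (Set.indicator_of_mem (show x ∈ π ⁻¹' halfPlane θ' q from h'.le) _).symm

lemma exists_halfPlane_integral_eq_zero (hπ : Measurable π) (hnull : NullOnLines μ π)
    (h₁ : Integrable F₁ μ) (h₂ : Integrable F₂ μ) (e₁ : ∫ x, F₁ x ∂μ = 0)
    (e₂ : 0 < ∫ x, F₂ x ∂μ) (q : ℝ × ℝ) :
    ∃ θ, ∫ x in π ⁻¹' halfPlane θ q, F₁ x ∂μ = 0 ∧ 0 < ∫ x in π ⁻¹' halfPlane θ q, F₂ x ∂μ := by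
  have hopp (θ : ℝ) := setIntegral_halfPlane_add hπ hnull h₁ θ q
  have hcont := continuous_setIntegral_halfPlane hπ hnull h₁ q
  obtain ⟨θ, hθ⟩ : ∃ θ, ∫ x in π ⁻¹' halfPlane θ q, F₁ x ∂μ = 0 := by
    have h := hopp 0
    rcases le_total (∫ x in π ⁻¹' halfPlane 0 q, F₁ x ∂μ) 0 with h0 | h0
    · exact mem_range_of_exists_le_of_exists_ge hcont ⟨0, h0⟩ ⟨0 + Real.pi, by linarith⟩
    · exact mem_range_of_exists_le_of_exists_ge hcont ⟨0 + Real.pi, by linarith⟩ ⟨0, h0⟩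
  rcases lt_or_ge 0 (∫ x in π ⁻¹' halfPlane θ q, F₂ x ∂μ) with h0 | h0
  · exact ⟨θ, hθ, h0⟩
  · exact ⟨θ + Real.pi, by linarith [hopp θ],
      by linarith [setIntegral_halfPlane_add hπ hnull h₂ θ q]⟩

lemma IsBalancedRegion.exists_inter_halfPlane (hS : IsBalancedRegion μ π F₁ F₂ S)
    (hπ : Measurable π) (hnull : NullOnLines μ π) (h₁ : Integrable F₁ μ) (h₂ : Integrable F₂ μ)
    (q : ℝ × ℝ) : ∃ θ, IsBalancedRegion μ π F₁ F₂ (halfPlane θ q ∩ S) := by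
  obtain ⟨θ, g₁, g₂⟩ := exists_halfPlane_integral_eq_zero hπ (hnull.restrict _) h₁.restrict
    h₂.restrict hS.integral_eq_zero hS.integral_pos q
  rw [Measure.restrict_restrict (hπ (isClosed_halfPlane θ q).measurableSet),
    ← Set.preimage_inter] at g₁ g₂
  exact ⟨θ, (convex_halfPlane θ q).inter hS.convex, (isClosed_halfPlane θ q).inter hS.isClosed,
    g₁, g₂⟩

lemma exists_antitone_isBalancedRegion (hπ : Measurable π) (hnull : NullOnLines μ π)
    (h₁ : Integrable F₁ μ) (h₂ : Integrable F₂ μ) (e₁ : ∫ x, F₁ x ∂μ = 0)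
    (e₂ : 0 < ∫ x, F₂ x ∂μ) (q : ℕ → ℝ × ℝ) :
    ∃ S : ℕ → Set (ℝ × ℝ), Antitone S ∧ (∀ i, IsBalancedRegion μ π F₁ F₂ (S i)) ∧
      ∀ i, ∃ θ, S (i + 1) ⊆ halfPlane θ (q i) := by
  choose θ hθ using fun (i : ℕ) (S : {S // IsBalancedRegion μ π F₁ F₂ S}) =>
    S.2.exists_inter_halfPlane hπ hnull h₁ h₂ (q i)
  let S : ℕ → {S // IsBalancedRegion μ π F₁ F₂ S} := fun n =>
    Nat.rec ⟨Set.univ, convex_univ, isClosed_univ, by simpa using e₁, by simpa using e₂⟩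
      (fun i T => ⟨_, hθ i T⟩) n
  exact ⟨fun i => (S i).1, antitone_nat_of_succ_le fun i => Set.inter_subset_right,
    fun i => (S i).2, fun i => ⟨θ i (S i), Set.inter_subset_left⟩⟩

lemma interior_iInter_eq_empty_of_subset_halfPlane {S : ℕ → Set (ℝ × ℝ)} {q : ℕ → ℝ × ℝ}
    (hq : DenseRange q) (hS : ∀ i, ∃ θ, S (i + 1) ⊆ halfPlane θ (q i)) :
    interior (⋂ i, S i) = ∅ := by
  by_contra hne
  obtain ⟨_, hmem, i, rfl⟩ :=
    hq.inter_open_nonempty _ isOpen_interior (Set.nonempty_iff_ne_empty.2 hne)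
  obtain ⟨θ, hθ⟩ := hS i
  exact notMem_interior_halfPlane θ (q i)
    (interior_mono ((Set.iInter_subset S (i + 1)).trans hθ) hmem)

lemma exists_forall_abs_planeProj_sub_lt {S : ℕ → Set (ℝ × ℝ)} (hanti : Antitone S)
    (hcl : ∀ i, IsClosed (S i)) {K : Set (ℝ × ℝ)} (hK : IsCompact K) {θ ε : ℝ} (hε : 0 < ε)
    (hline : ∀ y ∈ ⋂ i, S i, ∀ z ∈ ⋂ i, S i, planeProj θ y = planeProj θ z) :
    ∃ i, ∀ y ∈ S i ∩ K, ∀ z ∈ S i ∩ K, |planeProj θ y - planeProj θ z| < ε := by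
  have hcomp (i : ℕ) : IsCompact (S i ∩ K) := hK.inter_left (hcl i)
  have hmono : Antitone fun i => (S i ∩ K) ×ˢ (S i ∩ K) := fun i j hij =>
    Set.prod_mono (Set.inter_subset_inter_left _ (hanti hij))
      (Set.inter_subset_inter_left _ (hanti hij))
  have hopen : IsOpen {p : (ℝ × ℝ) × (ℝ × ℝ) | |planeProj θ p.1 - planeProj θ p.2| < ε} :=
    isOpen_lt (by fun_prop) continuous_const
  obtain ⟨i, hi⟩ := exists_subset_nhds_of_isCompact' hmono.directed_ge
    (fun i => (hcomp i).prod (hcomp i)) (fun i => ((hcomp i).prod (hcomp i)).isClosed)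
    fun p hp => hopen.mem_nhds <| by
      rw [Set.mem_iInter] at hp
      have := hline p.1 (Set.mem_iInter.2 fun i => (hp i).1.1) p.2
        (Set.mem_iInter.2 fun i => (hp i).2.1)
      simpa [this] using hε
  exact ⟨i, fun y hy z hz => hi (Set.mk_mem_prod hy hz)⟩

theorem exists_thin_isBalancedRegion (hπ : Measurable π) (hnull : NullOnLines μ π)
    (h₁ : Integrable F₁ μ) (h₂ : Integrable F₂ μ) (e₁ : ∫ x, F₁ x ∂μ = 0)
    (e₂ : 0 < ∫ x, F₂ x ∂μ) {K : Set (ℝ × ℝ)} (hK : IsCompact K) {ε : ℝ} (hε : 0 < ε) :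
    ∃ S θ, IsBalancedRegion μ π F₁ F₂ S ∧
      ∀ y ∈ S ∩ K, ∀ z ∈ S ∩ K, |planeProj θ y - planeProj θ z| < ε := by
  obtain ⟨S, hanti, hS, hhalf⟩ := exists_antitone_isBalancedRegion hπ hnull h₁ h₂ e₁ e₂
    (TopologicalSpace.denseSeq (ℝ × ℝ))
  obtain ⟨θ, hline⟩ := exists_planeProj_eq_of_interior_eq_empty
    (convex_iInter fun i => (hS i).convex) (interior_iInter_eq_empty_of_subset_halfPlane
      (TopologicalSpace.denseRange_denseSeq _) hhalf)
  obtain ⟨i, hi⟩ := exists_forall_abs_planeProj_sub_lt hanti (fun i => (hS i).isClosed) hK hε hline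
  exact ⟨S i, θ, hS i, hi⟩

end Bisection

/-! ### Gaussian integrals -/

/-- The weight `t ↦ exp (-β t²)`; the rate `β` is an arbitrary real number. -/
noncomputable def gaussianWeight (β t : ℝ) : ℝ := Real.exp (-t ^ 2 * β)

lemma gaussianWeight_pos (β t : ℝ) : 0 < gaussianWeight β t := Real.exp_pos _

@[fun_prop]
lemma continuous_gaussianWeight (β : ℝ) : Continuous (gaussianWeight β) := by
  unfold gaussianWeight
  fun_prop

lemma gaussianWeight_mul_neg (β t : ℝ) : gaussianWeight β t * gaussianWeight (-β) t = 1 := by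
  rw [gaussianWeight, gaussianWeight, ← Real.exp_add, mul_neg, add_neg_cancel, Real.exp_zero]

lemma gaussianWeight_mul (β β' t : ℝ) :
    gaussianWeight β t * gaussianWeight β' t = gaussianWeight (β + β') t := by
  rw [gaussianWeight, gaussianWeight, gaussianWeight, ← Real.exp_add, mul_add]

lemma gaussianWeight_sq (β t : ℝ) : gaussianWeight β t ^ 2 = gaussianWeight (2 * β) t := by
  rw [sq, gaussianWeight_mul, two_mul]

lemma integrable_mul_of_support_subset {E : Type*} [NormedAddCommGroup E] [ProperSpace E]
    [MeasurableSpace E] [OpensMeasurableSpace E] {μ : Measure E} {f w : E → ℝ} {R : ℝ}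
    (hf : Integrable f μ) (hsupp : Function.support f ⊆ Metric.closedBall 0 R)
    (hw : Continuous w) : Integrable (fun x => f x * w x) μ := by
  rw [← integrableOn_iff_integrable_of_support_subset hsupp] at hf
  rw [← integrableOn_iff_integrable_of_support_subset
    ((Function.support_mul_subset_left _ _).trans hsupp)]
  exact hf.mul_continuousOn hw.continuousOn (isCompact_closedBall 0 R)

/-- The class of functions in which the dimension is reduced: bounded measurable logconcave
functions supported in the centred ball of radius `R`. -/
structure IsBoundedLogConcave {E : Type*} [NormedAddCommGroup E] [NormedSpace ℝ E]
    [MeasurableSpace E] (R : ℝ) (f : E → ℝ) : Prop where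
  isLogConcave : IsLogConcave id f
  measurable : Measurable f
  bddAbove : BddAbove (Set.range f)
  support_subset : Function.support f ⊆ Metric.closedBall 0 R

namespace IsBoundedLogConcave

variable {E F : Type*} [NormedAddCommGroup E] [NormedSpace ℝ E] [MeasurableSpace E]
  [NormedAddCommGroup F] [NormedSpace ℝ F] [MeasurableSpace F] {f : E → ℝ} {R : ℝ}

lemma norm_le (hf : IsBoundedLogConcave R f) {x : E} (hx : f x ≠ 0) : ‖x‖ ≤ R :=
  mem_closedBall_zero_iff.1 (hf.support_subset hx)

lemma indicator (hf : IsBoundedLogConcave R f) {D : Set E} (hD : Convex ℝ D)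
    (hDm : MeasurableSet D) : IsBoundedLogConcave R (D.indicator f) where
  isLogConcave := hf.isLogConcave.indicator hD
  measurable := hf.measurable.indicator hDm
  bddAbove := by
    obtain ⟨M, hM⟩ := hf.bddAbove
    refine ⟨M, ?_⟩
    rintro _ ⟨x, rfl⟩
    exact Set.indicator_apply_le' (fun _ => hM ⟨x, rfl⟩)
      fun _ => (hf.isLogConcave.nonneg x).trans (hM ⟨x, rfl⟩)
  support_subset := by
    rw [Set.support_indicator]
    exact Set.inter_subset_right.trans hf.support_subset

lemma comp_affineMap (hf : IsBoundedLogConcave R f) {φ : F →ᵃ[ℝ] E} (hφ : Measurable φ)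
    (hnorm : ∀ y, ‖y‖ ≤ ‖φ y‖) : IsBoundedLogConcave R fun y => f (φ y) where
  isLogConcave := hf.isLogConcave.comp_affineMap φ
  measurable := hf.measurable.comp hφ
  bddAbove := hf.bddAbove.mono (Set.range_comp_subset_range φ f)
  support_subset y hy := mem_closedBall_zero_iff.2 ((hnorm y).trans (hf.norm_le hy))

variable [ProperSpace E] {μ : Measure E} [IsFiniteMeasureOnCompacts μ]

lemma integrable (hf : IsBoundedLogConcave R f) : Integrable f μ := by
  obtain ⟨M, hM⟩ := hf.bddAbove
  rw [← integrableOn_iff_integrable_of_support_subset hf.support_subset]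
  refine Measure.integrableOn_of_bounded (M := M) measure_closedBall_lt_top.ne
    hf.measurable.aestronglyMeasurable (.of_forall fun x => ?_)
  rw [Real.norm_of_nonneg (hf.isLogConcave.nonneg x)]
  exact hM ⟨x, rfl⟩

lemma integrable_mul [OpensMeasurableSpace E] (hf : IsBoundedLogConcave R f) {w : E → ℝ}
    (hw : Continuous w) : Integrable (fun x => f x * w x) μ :=
  integrable_mul_of_support_subset hf.integrable hf.support_subset hw

lemma integral_mul_le_integral_mul [OpensMeasurableSpace E] (hf : IsBoundedLogConcave R f)
    {w w' : E → ℝ} (hw : Continuous w) (hw' : Continuous w') (h : ∀ x, f x ≠ 0 → w x ≤ w' x) :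
    ∫ x, f x * w x ∂μ ≤ ∫ x, f x * w' x ∂μ := by
  refine integral_mono (hf.integrable_mul hw) (hf.integrable_mul hw') fun x => ?_
  rcases eq_or_ne (f x) 0 with hx | hx
  · simp only [hx, zero_mul, le_refl]
  · exact mul_le_mul_of_nonneg_left (h x hx) (hf.isLogConcave.nonneg x)

lemma integral_le (hf : IsBoundedLogConcave R f) {M : ℝ} (hM : ∀ x, f x ≤ M) :
    ∫ x, f x ∂μ ≤ M * μ.real (Metric.closedBall 0 R) := by
  rw [← setIntegral_eq_integral_of_forall_compl_eq_zero (s := Metric.closedBall 0 R)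
    fun x hx => Function.notMem_support.1 fun h => hx (hf.support_subset h)]
  refine (Real.le_norm_self _).trans (norm_setIntegral_le_of_norm_le_const
    measure_closedBall_lt_top fun x _ => ?_)
  exact (Real.norm_of_nonneg (hf.isLogConcave.nonneg x)).trans_le (hM x)

end IsBoundedLogConcave

section GaussianIntegral

variable {E : Type*} [NormedAddCommGroup E] [InnerProductSpace ℝ E] {v : E}

/-- The coordinates `(y, t) ↦ y + t v` adapted to the splitting of `E` along `v`. -/
noncomputable def orthogonalCoord (v : E) : (ℝ ∙ v)ᗮ × ℝ →ₗ[ℝ] E :=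
  (ℝ ∙ v)ᗮ.subtype.coprod (LinearMap.toSpanSingleton ℝ E v)

lemma orthogonalCoord_apply (v : E) (p : (ℝ ∙ v)ᗮ × ℝ) :
    orthogonalCoord v p = p.1 + p.2 • v := rfl

lemma inner_orthogonalCoord (hv : ‖v‖ = 1) (p : (ℝ ∙ v)ᗮ × ℝ) :
    inner ℝ v (orthogonalCoord v p) = p.2 := by
  rw [orthogonalCoord_apply, inner_add_right, Submodule.mem_orthogonal_singleton_iff_inner_right.1
    p.1.2, inner_smul_right, real_inner_self_eq_norm_sq, hv]
  ring

lemma norm_orthogonalCoord_sq (hv : ‖v‖ = 1) (p : (ℝ ∙ v)ᗮ × ℝ) :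
    ‖orthogonalCoord v p‖ ^ 2 = ‖p.1‖ ^ 2 + p.2 ^ 2 := by
  have horth : inner ℝ (p.1 : E) v = 0 :=
    Submodule.mem_orthogonal_singleton_iff_inner_left.1 p.1.2
  rw [orthogonalCoord_apply, norm_add_sq_real, inner_smul_right, horth, norm_smul, hv, mul_one,
    Real.norm_eq_abs, sq_abs, mul_zero, mul_zero, add_zero, Submodule.coe_norm]

lemma gaussianWeight_norm_orthogonalCoord (hv : ‖v‖ = 1) (β : ℝ) (p : (ℝ ∙ v)ᗮ × ℝ) :
    gaussianWeight β ‖orthogonalCoord v p‖ = gaussianWeight β ‖p.1‖ * gaussianWeight β p.2 := by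
  rw [gaussianWeight, norm_orthogonalCoord_sq hv, gaussianWeight, gaussianWeight, ← Real.exp_add]
  ring_nf

lemma norm_le_norm_orthogonalCoord (hv : ‖v‖ = 1) (p : (ℝ ∙ v)ᗮ × ℝ) :
    ‖p‖ ≤ ‖orthogonalCoord v p‖ := by
  have h := norm_orthogonalCoord_sq hv p
  refine max_le ?_ ?_
  · exact le_of_sq_le_sq (by linarith [sq_nonneg p.2]) (norm_nonneg _)
  · exact abs_le_of_sq_le_sq (by linarith [sq_nonneg ‖p.1‖]) (norm_nonneg _)

variable [FiniteDimensional ℝ E] [MeasurableSpace E] [BorelSpace E] {f : E → ℝ} {R : ℝ}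

/-- `orthogonalCoord v` as an isometry for the Euclidean norm of the product. -/
noncomputable def orthogonalCoordIsometry (hv : ‖v‖ = 1) : WithLp 2 ((ℝ ∙ v)ᗮ × ℝ) ≃ₗᵢ[ℝ] E :=
  LinearIsometry.toLinearIsometryEquiv
    { toLinearMap := orthogonalCoord v ∘ₗ (WithLp.linearEquiv 2 ℝ ((ℝ ∙ v)ᗮ × ℝ)).toLinearMap
      norm_map' := fun p => by
        rw [← sq_eq_sq₀ (norm_nonneg _) (norm_nonneg _), WithLp.prod_norm_sq_eq_of_L2,
          Real.norm_eq_abs, sq_abs]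
        exact norm_orthogonalCoord_sq hv _ }
    (by
      have hv0 : v ≠ 0 := norm_ne_zero_iff.1 (by simp [hv])
      have := (ℝ ∙ v).finrank_add_finrank_orthogonal
      rw [finrank_span_singleton hv0] at this
      rw [LinearEquiv.finrank_eq (WithLp.linearEquiv 2 ℝ ((ℝ ∙ v)ᗮ × ℝ)), Module.finrank_prod,
        Module.finrank_self, ← this, add_comm])

lemma measurePreserving_orthogonalCoord (hv : ‖v‖ = 1) :
    MeasurePreserving (orthogonalCoord v) :=
  (orthogonalCoordIsometry hv).measurePreserving.comp (WithLp.volume_preserving_toLp _ _)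

lemma measurableEmbedding_orthogonalCoord (hv : ‖v‖ = 1) :
    MeasurableEmbedding (orthogonalCoord v) :=
  (orthogonalCoordIsometry hv).toHomeomorph.measurableEmbedding.comp
    (MeasurableEquiv.toLp 2 _).measurableEmbedding

lemma volume_setOf_inner_eq (hv : ‖v‖ = 1) (d : ℝ) : volume {x | inner ℝ v x = d} = 0 := by
  have hpre : orthogonalCoord v ⁻¹' {x | inner ℝ v x = d} = Set.univ ×ˢ {d} := by
    ext p
    simp [inner_orthogonalCoord hv]
  rw [← (measurePreserving_orthogonalCoord hv).measure_preimage_emb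
    (measurableEmbedding_orthogonalCoord hv), hpre, Measure.volume_eq_prod, Measure.prod_prod,
    Real.volume_singleton, mul_zero]

/-- The integral of `f` against the Gaussian weight of rate `β`, called `G (1 / (2 β))` in the
paper. -/
noncomputable def gaussianIntegral (β : ℝ) (f : E → ℝ) : ℝ := ∫ x, f x * gaussianWeight β ‖x‖

lemma gaussianIntegral_nonneg (hf0 : ∀ x, 0 ≤ f x) (β : ℝ) : 0 ≤ gaussianIntegral β f :=
  MeasureTheory.integral_nonneg fun x => mul_nonneg (hf0 x) (gaussianWeight_pos _ _).le

lemma integrable_mul_gaussianWeight_iff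
    (hsupp : Function.support f ⊆ Metric.closedBall 0 R) (β : ℝ) :
    Integrable (fun x => f x * gaussianWeight β ‖x‖) ↔ Integrable f := by
  refine ⟨fun h => ?_, fun h =>
    integrable_mul_of_support_subset h hsupp (by fun_prop)⟩
  simpa only [mul_assoc, gaussianWeight_mul_neg, mul_one] using
    integrable_mul_of_support_subset (w := fun x => gaussianWeight (-β) ‖x‖) h
      ((Function.support_mul_subset_left _ _).trans hsupp) (by fun_prop)

lemma gaussianIntegral_eq_zero_iff (hf0 : ∀ x, 0 ≤ f x) (hf : Integrable f)
    (hsupp : Function.support f ⊆ Metric.closedBall 0 R) (β : ℝ) :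
    gaussianIntegral β f = 0 ↔ f =ᵐ[volume] 0 := by
  rw [gaussianIntegral, integral_eq_zero_iff_of_nonneg
    (fun x => mul_nonneg (hf0 x) (gaussianWeight_pos _ _).le)
    ((integrable_mul_gaussianWeight_iff hsupp β).2 hf)]
  simp only [Filter.EventuallyEq, Pi.zero_apply, mul_eq_zero, (gaussianWeight_pos _ _).ne',
    or_false]

lemma setIntegral_gaussian_sub_mul (hf : Integrable f)
    (hsupp : Function.support f ⊆ Metric.closedBall 0 R) {D : Set E} (hD : MeasurableSet D)
    (β β' s : ℝ) :
    ∫ x in D, (f x * gaussianWeight β ‖x‖ - s * (f x * gaussianWeight β' ‖x‖)) =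
      gaussianIntegral β (D.indicator f) - s * gaussianIntegral β' (D.indicator f) := by
  have hint (β : ℝ) := (integrable_mul_gaussianWeight_iff hsupp β).2 hf
  rw [MeasureTheory.integral_sub (hint β).integrableOn ((hint β').const_mul s).integrableOn,
    MeasureTheory.integral_const_mul, ← MeasureTheory.integral_indicator hD,
    ← MeasureTheory.integral_indicator hD]
  simp only [gaussianIntegral, Set.indicator_mul_left]

lemma IsBoundedLogConcave.gaussianIntegral_pos_of_pos (hf : IsBoundedLogConcave R f) {β β' : ℝ}
    (h : 0 < gaussianIntegral β f) : 0 < gaussianIntegral β' f := by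
  refine (gaussianIntegral_nonneg hf.isLogConcave.nonneg β').lt_of_ne' fun h0 => h.ne' ?_
  rw [gaussianIntegral_eq_zero_iff hf.isLogConcave.nonneg hf.integrable hf.support_subset] at h0 ⊢
  exact h0

/-- The inequality to be proved on `E`, for bounded functions. -/
def GaussianLocalization (E : Type*) [NormedAddCommGroup E] [InnerProductSpace ℝ E]
    [FiniteDimensional ℝ E] [MeasurableSpace E] [BorelSpace E] (R c : ℝ) (β : Fin 3 → ℝ) : Prop :=
  ∀ ⦃f : E → ℝ⦄, IsBoundedLogConcave R f →
    gaussianIntegral (β 0) f * gaussianIntegral (β 1) f ≤ c * gaussianIntegral (β 2) f ^ 2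

end GaussianIntegral

/-! ### Reduction of the dimension -/

section Slab

variable {E : Type*} [NormedAddCommGroup E] [InnerProductSpace ℝ E] [FiniteDimensional ℝ E]
  [MeasurableSpace E] [BorelSpace E] {v : E} {f : E → ℝ} {R β : ℝ}

/-- The marginal of `f` on the hyperplane orthogonal to `v`. -/
noncomputable def orthogonalMarginal (v : E) (f : E → ℝ) (y : (ℝ ∙ v)ᗮ) : ℝ :=
  ∫ t, f (orthogonalCoord v (y, t))

lemma IsBoundedLogConcave.comp_orthogonalCoord (hf : IsBoundedLogConcave R f) (hv : ‖v‖ = 1) :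
    IsBoundedLogConcave R fun p => f (orthogonalCoord v p) :=
  hf.comp_affineMap (φ := (orthogonalCoord v).toAffineMap)
    (measurableEmbedding_orthogonalCoord hv).measurable (norm_le_norm_orthogonalCoord hv)

lemma IsBoundedLogConcave.comp_orthogonalCoord_mk (hf : IsBoundedLogConcave R f) (hv : ‖v‖ = 1)
    (y : (ℝ ∙ v)ᗮ) :
    IsBoundedLogConcave R fun t => f (orthogonalCoord v (y, t)) :=
  (hf.comp_orthogonalCoord hv).comp_affineMap
    (φ := (AffineMap.const ℝ ℝ y).prod (AffineMap.id ℝ ℝ)) measurable_prodMk_left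
    fun t => norm_snd_le ((y, t) : (ℝ ∙ v)ᗮ × ℝ)

lemma IsBoundedLogConcave.marginal (hf : IsBoundedLogConcave R f) (hv : ‖v‖ = 1) :
    IsBoundedLogConcave R (orthogonalMarginal v f) where
  isLogConcave := (hf.comp_orthogonalCoord hv).isLogConcave.marginal
    (fun y => (hf.comp_orthogonalCoord_mk hv y).integrable)
    fun y => (hf.comp_orthogonalCoord_mk hv y).bddAbove
  measurable := (hf.comp_orthogonalCoord hv).measurable.stronglyMeasurable.integral_prod_right'
    |>.measurable
  bddAbove := by
    obtain ⟨M, hM⟩ := hf.bddAbove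
    refine ⟨M * volume.real (Metric.closedBall (0 : ℝ) R), ?_⟩
    rintro _ ⟨y, rfl⟩
    exact (hf.comp_orthogonalCoord_mk hv y).integral_le fun t => hM ⟨_, rfl⟩
  support_subset y hy := by
    obtain ⟨t, ht⟩ : ∃ t, f (orthogonalCoord v (y, t)) ≠ 0 := by
      by_contra! h
      exact hy (by simp only [orthogonalMarginal, h, integral_zero])
    exact mem_closedBall_zero_iff.2 <| (norm_fst_le ((y, t) : (ℝ ∙ v)ᗮ × ℝ)).trans
      ((hf.comp_orthogonalCoord hv).norm_le ht)

lemma IsBoundedLogConcave.gaussianIntegral_orthogonalMarginal (hf : IsBoundedLogConcave R f)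
    (hv : ‖v‖ = 1) (β : ℝ) :
    gaussianIntegral β (orthogonalMarginal v f) =
      ∫ p, f (orthogonalCoord v p) * gaussianWeight β ‖p.1‖ := by
  have hint : Integrable fun p => f (orthogonalCoord v p) * gaussianWeight β ‖p.1‖ :=
    (hf.comp_orthogonalCoord hv).integrable_mul (by fun_prop)
  rw [Measure.volume_eq_prod] at hint ⊢
  simp only [integral_prod _ hint, MeasureTheory.integral_mul_const]
  rfl

lemma gaussianIntegral_eq_integral_orthogonalCoord (hv : ‖v‖ = 1) (β : ℝ) (f : E → ℝ) :
    gaussianIntegral β f =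
      ∫ p, f (orthogonalCoord v p) * (gaussianWeight β ‖p.1‖ * gaussianWeight β p.2) := by
  rw [gaussianIntegral, ← (measurePreserving_orthogonalCoord hv).integral_comp
    (measurableEmbedding_orthogonalCoord hv)]
  simp only [gaussianWeight_norm_orthogonalCoord hv]

section Comparison

variable {K t₀ ε : ℝ}

lemma IsBoundedLogConcave.snd_mem_Icc_of_slab (hf : IsBoundedLogConcave R f) (hv : ‖v‖ = 1)
    (hslab : ∀ x, f x ≠ 0 → |inner ℝ v x - t₀| ≤ ε) {p : (ℝ ∙ v)ᗮ × ℝ}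
    (hp : f (orthogonalCoord v p) ≠ 0) : p.2 ∈ Set.Icc (-R) R ∧ |p.2 - t₀| ≤ ε := by
  refine ⟨abs_le.1 ((norm_snd_le p).trans ((hf.comp_orthogonalCoord hv).norm_le hp)), ?_⟩
  simpa only [inner_orthogonalCoord hv] using hslab _ hp

lemma IsBoundedLogConcave.gaussianIntegral_le_orthogonalMarginal (hf : IsBoundedLogConcave R f)
    (hv : ‖v‖ = 1) (hK : HarnackBound R ε K (gaussianWeight β)) (ht₀ : t₀ ∈ Set.Icc (-R) R)
    (hslab : ∀ x, f x ≠ 0 → |inner ℝ v x - t₀| ≤ ε) :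
    gaussianIntegral β f ≤
      K * (gaussianWeight β t₀ * gaussianIntegral β (orthogonalMarginal v f)) := by
  rw [gaussianIntegral_eq_integral_orthogonalCoord hv, hf.gaussianIntegral_orthogonalMarginal hv,
    ← mul_assoc, mul_comm, ← MeasureTheory.integral_mul_const]
  simp only [mul_assoc]
  refine (hf.comp_orthogonalCoord hv).integral_mul_le_integral_mul (by fun_prop) (by fun_prop)
    fun p hp => mul_le_mul_of_nonneg_left ?_ (gaussianWeight_pos _ _).le
  obtain ⟨hpR, hclose⟩ := hf.snd_mem_Icc_of_slab hv hslab hp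
  exact hK _ hpR _ ht₀ hclose

lemma IsBoundedLogConcave.orthogonalMarginal_le_gaussianIntegral (hf : IsBoundedLogConcave R f)
    (hv : ‖v‖ = 1) (hK : HarnackBound R ε K (gaussianWeight β)) (ht₀ : t₀ ∈ Set.Icc (-R) R)
    (hslab : ∀ x, f x ≠ 0 → |inner ℝ v x - t₀| ≤ ε) :
    gaussianWeight β t₀ * gaussianIntegral β (orthogonalMarginal v f) ≤
      K * gaussianIntegral β f := by
  rw [gaussianIntegral_eq_integral_orthogonalCoord hv, hf.gaussianIntegral_orthogonalMarginal hv,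
    mul_comm, mul_comm K, ← MeasureTheory.integral_mul_const, ← MeasureTheory.integral_mul_const]
  simp only [mul_assoc]
  refine (hf.comp_orthogonalCoord hv).integral_mul_le_integral_mul (by fun_prop) (by fun_prop)
    fun p hp => mul_le_mul_of_nonneg_left ?_ (gaussianWeight_pos _ _).le
  obtain ⟨hpR, hclose⟩ := hf.snd_mem_Icc_of_slab hv hslab hp
  rw [mul_comm]
  exact hK _ ht₀ _ hpR ((abs_sub_comm _ _).trans_le hclose)

end Comparison

theorem GaussianLocalization.le_of_slab {β : Fin 3 → ℝ} {c K t₀ ε : ℝ}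
    (hP : GaussianLocalization (ℝ ∙ v)ᗮ R c β) (hv : ‖v‖ = 1) (hc : 0 ≤ c)
    (hβ : β 0 + β 1 = 2 * β 2) (hK0 : 0 ≤ K)
    (hK : ∀ i, HarnackBound R ε K (gaussianWeight (β i))) (hf : IsBoundedLogConcave R f)
    (ht₀ : t₀ ∈ Set.Icc (-R) R) (hslab : ∀ x, f x ≠ 0 → |inner ℝ v x - t₀| ≤ ε) :
    gaussianIntegral (β 0) f * gaussianIntegral (β 1) f ≤
      K ^ 4 * c * gaussianIntegral (β 2) f ^ 2 := by
  have hmarg := hf.marginal hv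
  set G := fun i => gaussianIntegral (β i) (orthogonalMarginal v f)
  have hG (i) : 0 ≤ G i := gaussianIntegral_nonneg hmarg.isLogConcave.nonneg _
  set w := fun i => gaussianWeight (β i) t₀
  have hw (i) : 0 ≤ w i := (gaussianWeight_pos _ _).le
  have hww : w 0 * w 1 = w 2 ^ 2 := by
    simp only [w, gaussianWeight_mul, hβ, gaussianWeight_sq]
  have upper (i) : gaussianIntegral (β i) f ≤ K * (w i * G i) :=
    hf.gaussianIntegral_le_orthogonalMarginal hv (hK i) ht₀ hslab
  have lower (i) : w i * G i ≤ K * gaussianIntegral (β i) f :=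
    hf.orthogonalMarginal_le_gaussianIntegral hv (hK i) ht₀ hslab
  calc gaussianIntegral (β 0) f * gaussianIntegral (β 1) f
      ≤ K * (w 0 * G 0) * (K * (w 1 * G 1)) :=
        mul_le_mul (upper 0) (upper 1) (gaussianIntegral_nonneg hf.isLogConcave.nonneg _)
          (mul_nonneg hK0 (mul_nonneg (hw 0) (hG 0)))
    _ = K ^ 2 * w 2 ^ 2 * (G 0 * G 1) := by rw [← hww]; ring
    _ ≤ K ^ 2 * w 2 ^ 2 * (c * G 2 ^ 2) :=
        mul_le_mul_of_nonneg_left (hP hmarg) (by positivity)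
    _ = K ^ 2 * c * (w 2 * G 2) ^ 2 := by ring
    _ ≤ K ^ 2 * c * (K * gaussianIntegral (β 2) f) ^ 2 :=
        mul_le_mul_of_nonneg_left
          (pow_le_pow_left₀ (mul_nonneg (hw 2) (hG 2)) (lower 2) 2) (by positivity)
    _ = K ^ 4 * c * gaussianIntegral (β 2) f ^ 2 := by ring

theorem NeedleBound.gaussianLocalization_of_finrank_eq_one {β : Fin 3 → ℝ} {c : ℝ}
    (H : NeedleBound R c fun i => gaussianWeight (β i)) (hR : 0 < R) (hc : 0 ≤ c)
    (hE : Module.finrank ℝ E = 1) : GaussianLocalization E R c β := by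
  intro f hf
  have : Nontrivial E := Module.nontrivial_of_finrank_pos (R := ℝ) (by omega)
  obtain ⟨v, hv⟩ := exists_norm_eq E zero_le_one
  let e : ℝ ≃ₗᵢ[ℝ] E := (LinearIsometry.toSpanSingleton ℝ E hv).toLinearIsometryEquiv
    (by rw [hE, Module.finrank_self])
  have hfe : IsBoundedLogConcave R fun t => f (e t) :=
    hf.comp_affineMap (φ := e.toLinearEquiv.toLinearMap.toAffineMap) e.continuous.measurable
      fun t => (e.norm_map t).ge
  have hpull (β : ℝ) :
      gaussianIntegral β f = ∫ t in (-R)..R, f (e t) * gaussianWeight β t := by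
    rw [integral_of_le (by linarith), ← integral_Icc_eq_integral_Ioc,
      setIntegral_eq_integral_of_forall_compl_eq_zero fun t ht => ?_, gaussianIntegral,
      ← e.measurePreserving.integral_comp e.toHomeomorph.measurableEmbedding]
    · simp only [gaussianWeight, e.norm_map, Real.norm_eq_abs, sq_abs]
    · rw [Function.notMem_support.1 fun h => ht (abs_le.1 (hfe.norm_le h)), zero_mul]
  rw [hpull, hpull, hpull]
  exact H.integral_mul_integral_le hR hc (fun i => by fun_prop)
    (fun i t => gaussianWeight_pos _ t) hfe.isLogConcave hfe.integrable hfe.bddAbove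

end Slab

section Induction

variable {E : Type*} [NormedAddCommGroup E] [InnerProductSpace ℝ E]

lemma exists_planeProj_comp_eq_inner [FiniteDimensional ℝ E] (hE : 2 ≤ Module.finrank ℝ E) :
    ∃ π : E →L[ℝ] ℝ × ℝ, ∀ θ, ∃ v : E, ‖v‖ = 1 ∧ ∀ x, planeProj θ (π x) = inner ℝ v x := by
  obtain ⟨e, he⟩ : ∃ e : Fin 2 → E, Orthonormal ℝ e :=
    ⟨_, (stdOrthonormalBasis ℝ E).orthonormal.comp _ (Fin.castLE_injective hE)⟩
  refine ⟨(innerSL ℝ (e 0)).prod (innerSL ℝ (e 1)), fun θ =>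
    ⟨Real.cos θ • e 0 + Real.sin θ • e 1, ?_, fun x => ?_⟩⟩
  · have horth : inner ℝ (e 0) (e 1) = 0 := he.2 (by decide)
    rw [← sq_eq_sq₀ (norm_nonneg _) zero_le_one, norm_add_sq_real, real_inner_smul_left,
      real_inner_smul_right, horth, norm_smul, norm_smul, he.1, he.1]
    simp
  · simp [planeProj_apply, inner_add_left, real_inner_smul_left]

variable [FiniteDimensional ℝ E] [MeasurableSpace E] [BorelSpace E] {f : E → ℝ} {R c : ℝ}
  {β : Fin 3 → ℝ}

/-- The comparison of the three Gaussian integrals of `f` that planar bisection preserves. -/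
structure IsBalanced (β : Fin 3 → ℝ) (s r : ℝ) (f : E → ℝ) : Prop where
  eq_mul : gaussianIntegral (β 0) f = s * gaussianIntegral (β 2) f
  mul_lt : r * gaussianIntegral (β 2) f < gaussianIntegral (β 1) f

lemma IsBalanced.exists_ne_zero {s r : ℝ} (h : IsBalanced β s r f) : ∃ x, f x ≠ 0 := by
  by_contra! h0
  simpa [gaussianIntegral, h0] using h.mul_lt

lemma IsBalanced.exists_thin_indicator {s r ε : ℝ} (h : IsBalanced β s r f)
    (hf : IsBoundedLogConcave R f) {π : E →L[ℝ] ℝ × ℝ} (hπ : NullOnLines volume π)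
    {K : Set (ℝ × ℝ)} (hK : IsCompact K) (hε : 0 < ε) :
    ∃ S θ, IsBoundedLogConcave R ((π ⁻¹' S).indicator f) ∧
      IsBalanced β s r ((π ⁻¹' S).indicator f) ∧
      ∀ y ∈ S ∩ K, ∀ z ∈ S ∩ K, |planeProj θ y - planeProj θ z| < ε := by
  let F (i : Fin 3) (k : ℝ) (x : E) : ℝ :=
    f x * gaussianWeight (β i) ‖x‖ - k * (f x * gaussianWeight (β 2) ‖x‖)
  have hF (i k) : Integrable (F i k) :=
    (hf.integrable_mul (by fun_prop)).sub ((hf.integrable_mul (by fun_prop)).const_mul k)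
  have integral_F_on (i k) {D : Set E} (hD : MeasurableSet D) : ∫ x in D, F i k x =
      gaussianIntegral (β i) (D.indicator f) - k * gaussianIntegral (β 2) (D.indicator f) :=
    setIntegral_gaussian_sub_mul hf.integrable hf.support_subset hD _ _ _
  have integral_F (i k) :
      ∫ x, F i k x = gaussianIntegral (β i) f - k * gaussianIntegral (β 2) f := by
    simpa using integral_F_on i k MeasurableSet.univ
  obtain ⟨S, θ, hS, hthin⟩ := exists_thin_isBalancedRegion π.continuous.measurable hπ (hF 0 s)
    (hF 1 r) (by rw [integral_F, h.eq_mul, sub_self]) (by rw [integral_F]; exact sub_pos.2 h.mul_lt)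
    hK hε
  have hSm : MeasurableSet (π ⁻¹' S) := π.continuous.measurable hS.isClosed.measurableSet
  have heq := hS.integral_eq_zero
  have hpos := hS.integral_pos
  rw [integral_F_on _ _ hSm] at heq hpos
  exact ⟨S, θ, hf.indicator (hS.convex.linear_preimage π.toLinearMap) hSm,
    ⟨sub_eq_zero.1 heq, sub_pos.1 hpos⟩, hthin⟩

theorem IsBalanced.exists_slab {s r ε : ℝ} (h : IsBalanced β s r f)
    (hf : IsBoundedLogConcave R f) (hE : 2 ≤ Module.finrank ℝ E) (hε : 0 < ε) :
    ∃ (g : E → ℝ) (v : E) (t₀ : ℝ), IsBoundedLogConcave R g ∧ IsBalanced β s r g ∧ ‖v‖ = 1 ∧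
      t₀ ∈ Set.Icc (-R) R ∧ ∀ x, g x ≠ 0 → |inner ℝ v x - t₀| ≤ ε := by
  obtain ⟨π, hπ⟩ := exists_planeProj_comp_eq_inner hE
  have hnull : NullOnLines volume π := fun θ d => by
    obtain ⟨v, hv, hvπ⟩ := hπ θ
    simpa only [hvπ] using volume_setOf_inner_eq hv d
  obtain ⟨S, θ, hg, hgb, hthin⟩ := h.exists_thin_indicator hf hnull
    ((isCompact_closedBall 0 R).image π.continuous) hε
  obtain ⟨v, hv, hvπ⟩ := hπ θ
  obtain ⟨x₀, hx₀⟩ := hgb.exists_ne_zero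
  have hmem {x : E} (hx : (π ⁻¹' S).indicator f x ≠ 0) : π x ∈ S ∩ π '' Metric.closedBall 0 R :=
    ⟨(Set.mem_of_indicator_ne_zero hx : x ∈ π ⁻¹' S), x, hg.support_subset hx, rfl⟩
  refine ⟨_, v, inner ℝ v x₀, hg, hgb, hv, abs_le.1 ?_, fun x hx => ?_⟩
  · calc |inner ℝ v x₀| ≤ ‖v‖ * ‖x₀‖ := abs_real_inner_le_norm v x₀
      _ ≤ R := by rw [hv, one_mul]; exact hg.norm_le hx₀
  · simpa only [hvπ] using (hthin _ (hmem hx) _ (hmem hx₀)).le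

lemma exists_eq_mul_and_mul_lt {A B C c : ℝ} (hA : 0 < A) (hC : 0 < C) (h : c * C ^ 2 < A * B) :
    ∃ s r, A = s * C ∧ r * C < B ∧ 0 < s ∧ c < s * r := by
  have hs : 0 < A / C := div_pos hA hC
  obtain ⟨r, hcr, hrB⟩ : ∃ r, c / (A / C) < r ∧ r < B / C := by
    refine exists_between ?_
    rw [div_lt_div_iff₀ hs hC, mul_div_assoc', lt_div_iff₀ hC]
    linarith
  exact ⟨A / C, r, (div_mul_cancel₀ A hC.ne').symm, (lt_div_iff₀ hC).1 hrB, hs,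
    (div_lt_iff₀' hs).1 hcr⟩

theorem GaussianLocalization.of_orthogonal (hE : 2 ≤ Module.finrank ℝ E)
    (hP : ∀ v : E, ‖v‖ = 1 → GaussianLocalization (ℝ ∙ v)ᗮ R c β) (hc : 0 ≤ c)
    (hβ : β 0 + β 1 = 2 * β 2) : GaussianLocalization E R c β := by
  intro f hf
  by_contra! hcon
  have hG0 : 0 < gaussianIntegral (β 0) f := by
    refine (gaussianIntegral_nonneg hf.isLogConcave.nonneg _).lt_of_ne fun h => ?_
    rw [← h, zero_mul] at hcon
    exact hcon.not_ge (by positivity)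
  obtain ⟨s, r, hs, hr, hs0, hsr⟩ :=
    exists_eq_mul_and_mul_lt hG0 (hf.gaussianIntegral_pos_of_pos hG0) hcon
  obtain ⟨K, hKsr, hK1⟩ : ∃ K : ℝ, K ^ 4 * c < s * r ∧ 1 < K := by
    have hcont : Filter.Tendsto (fun K : ℝ => K ^ 4 * c) (nhds 1) (nhds (1 ^ 4 * c)) :=
      Continuous.tendsto (by fun_prop) 1
    rw [one_pow, one_mul] at hcont
    exact (((hcont.eventually_lt_const hsr).filter_mono nhdsWithin_le_nhds).and
      (self_mem_nhdsWithin (s := Set.Ioi 1))).exists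
  obtain ⟨ε, hKε, hε⟩ : ∃ ε, (∀ i, HarnackBound R ε K (gaussianWeight (β i))) ∧ 0 < ε :=
    (((Filter.eventually_all.2 fun i => eventually_harnackBound (continuous_gaussianWeight (β i))
      (gaussianWeight_pos _) R hK1).filter_mono nhdsWithin_le_nhds).and
      (self_mem_nhdsWithin (s := Set.Ioi 0))).exists
  obtain ⟨g, v, t₀, hg, hgb, hv, ht₀, hslab⟩ := IsBalanced.exists_slab ⟨hs, hr⟩ hf hE hε
  have hslab_le := (hP v hv).le_of_slab hv hc hβ (by positivity) hKε hg ht₀ hslab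
  have hG2 : 0 < gaussianIntegral (β 2) g := by
    refine (gaussianIntegral_nonneg hg.isLogConcave.nonneg _).lt_of_ne' fun h => ?_
    have hG1 := hgb.mul_lt
    rw [h, mul_zero] at hG1
    exact (hg.gaussianIntegral_pos_of_pos hG1).ne' h
  refine lt_irrefl (K ^ 4 * c * gaussianIntegral (β 2) g ^ 2) ?_
  calc K ^ 4 * c * gaussianIntegral (β 2) g ^ 2 < s * r * gaussianIntegral (β 2) g ^ 2 := by gcongr
    _ = s * gaussianIntegral (β 2) g * (r * gaussianIntegral (β 2) g) := by ring
    _ ≤ s * gaussianIntegral (β 2) g * gaussianIntegral (β 1) g :=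
        mul_le_mul_of_nonneg_left hgb.mul_lt.le (by positivity)
    _ ≤ K ^ 4 * c * gaussianIntegral (β 2) g ^ 2 := hgb.eq_mul ▸ hslab_le

end Induction

theorem NeedleBound.gaussianLocalization {R c : ℝ} {β : Fin 3 → ℝ}
    (H : NeedleBound R c fun i => gaussianWeight (β i)) (hR : 0 < R) (hc : 0 ≤ c)
    (hβ : β 0 + β 1 = 2 * β 2) (E : Type*) [NormedAddCommGroup E] [InnerProductSpace ℝ E]
    [FiniteDimensional ℝ E] [Nontrivial E] [MeasurableSpace E] [BorelSpace E] :
    GaussianLocalization E R c β := by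
  suffices h : ∀ n, Module.finrank ℝ E = n + 1 → GaussianLocalization E R c β by
    obtain ⟨n, hn⟩ := Nat.exists_eq_add_one.2 (Module.finrank_pos (R := ℝ) (M := E))
    exact h n hn
  intro n hE
  induction n generalizing E with
  | zero => exact H.gaussianLocalization_of_finrank_eq_one hR hc hE
  | succ n ih =>
    have : Fact (Module.finrank ℝ E = n + 1 + 1) := ⟨hE⟩
    refine .of_orthogonal (by omega) (fun v hv => ?_) hc hβ
    have hn : Module.finrank ℝ (ℝ ∙ v)ᗮ = n + 1 :=
      Submodule.finrank_orthogonal_span_singleton (norm_ne_zero_iff.1 (by simp [hv]))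
    have : Nontrivial (ℝ ∙ v)ᗮ := Module.nontrivial_of_finrank_pos (R := ℝ) (by omega)
    exact ih _ hn

theorem GaussianLocalization.le_of_integrable {E : Type*} [NormedAddCommGroup E]
    [InnerProductSpace ℝ E] [FiniteDimensional ℝ E] [MeasurableSpace E] [BorelSpace E]
    {R c : ℝ} {β : Fin 3 → ℝ} (hP : GaussianLocalization E R c β) {f : E → ℝ}
    (hf : IsLogConcave id f) (hfm : Measurable f) (hfi : Integrable f)
    (hsupp : Function.support f ⊆ Metric.closedBall 0 R) :
    gaussianIntegral (β 0) f * gaussianIntegral (β 1) f ≤ c * gaussianIntegral (β 2) f ^ 2 := by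
  have hmin (k : ℕ) : IsLogConcave id fun x => min (f x) k := hf.min (.const k.cast_nonneg)
  have hlim (β : ℝ) : Filter.Tendsto (fun k : ℕ => gaussianIntegral β fun x => min (f x) k)
      Filter.atTop (nhds (gaussianIntegral β f)) := by
    refine tendsto_integral_of_dominated_convergence (fun x => f x * gaussianWeight β ‖x‖)
      (fun k => ((hfm.min measurable_const).mul (by fun_prop)).aestronglyMeasurable)
      ((integrable_mul_gaussianWeight_iff hsupp β).2 hfi) (fun k => .of_forall fun x => ?_)
      (.of_forall fun x => tendsto_const_nhds.congr' ?_)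
    · have hw := (gaussianWeight_pos β ‖x‖).le
      rw [Real.norm_of_nonneg (mul_nonneg ((hmin k).nonneg x) hw)]
      exact mul_le_mul_of_nonneg_right (min_le_left _ _) hw
    · filter_upwards [Filter.eventually_ge_atTop ⌈f x⌉₊] with k hk
      rw [min_eq_left (Nat.ceil_le.1 hk)]
  refine le_of_tendsto_of_tendsto' ((hlim _).mul (hlim _)) (((hlim _).pow 2).const_mul c)
    fun k => hP ⟨hmin k, hfm.min measurable_const, ⟨k, ?_⟩, fun x hx => hsupp fun h => hx ?_⟩
  · rintro _ ⟨x, rfl⟩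
    exact min_le_right _ _
  · simp [h]

theorem needle_reduction_general {E : Type*} [NormedAddCommGroup E] [InnerProductSpace ℝ E]
    [FiniteDimensional ℝ E] [Nontrivial E] [MeasurableSpace E] [BorelSpace E] {R c : ℝ}
    {β : Fin 3 → ℝ} (hβ : β 0 + β 1 = 2 * β 2) (hR : 0 < R) (hc : 0 ≤ c)
    (H : NeedleBound R c fun i => gaussianWeight (β i)) {f : E → ℝ} (hf0 : ∀ x, 0 ≤ f x)
    (hfm : Measurable f) (hf : LogConcaveFn f)
    (hsupp : Function.support f ⊆ Metric.closedBall 0 R) :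
    gaussianIntegral (β 0) f * gaussianIntegral (β 1) f ≤ c * gaussianIntegral (β 2) f ^ 2 := by
  by_cases hfi : Integrable f
  · exact (H.gaussianLocalization hR hc hβ E).le_of_integrable (hf.isLogConcave hf0) hfm hfi hsupp
  · rw [gaussianIntegral, MeasureTheory.integral_undef
      (mt (integrable_mul_gaussianWeight_iff hsupp _).1 hfi), zero_mul]
    positivity

/-- Localization (exponential-needle) reduction: if the one-dimensional needle
inequality holds for all intervals `[ℓ,u] ⊆ [-R₁,R₁]` and all `γ`, then for
every logconcave `f` supported on a compact subset of `R₁·B_n`, with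
`G(s) = ∫ f(x) e^{-‖x‖²/(2s)} dx`, one has
`G(σ²/(1+α))·G(σ²/(1-α)) ≤ c·G(σ²)²`. -/
theorem needle_reduction
    (n : ℕ) (hn : 1 ≤ n) (σ R₁ α c : ℝ) (hσ : 0 < σ) (hR : 0 < R₁)
    (hα0 : 0 < α) (hα1 : α < 1) (hc : 0 < c)
    (hneedle : ∀ ℓ u γ : ℝ, -R₁ ≤ ℓ → ℓ ≤ u → u ≤ R₁ →
      (∫ t in ℓ..u, Real.exp (γ * t) * Real.exp (-t ^ 2 * (1 + α) / (2 * σ ^ 2))) *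
        (∫ t in ℓ..u, Real.exp (γ * t) * Real.exp (-t ^ 2 * (1 - α) / (2 * σ ^ 2))) ≤
      c * (∫ t in ℓ..u, Real.exp (γ * t) * Real.exp (-t ^ 2 / (2 * σ ^ 2))) ^ 2)
    (f : EuclideanSpace ℝ (Fin n) → ℝ) (hf0 : ∀ x, 0 ≤ f x) (hfm : Measurable f)
    (hflc : LogConcaveFn f) (hfc : HasCompactSupport f)
    (hfsupp : Function.support f ⊆ Metric.closedBall 0 R₁) :
    (∫ x, f x * Real.exp (-‖x‖ ^ 2 / (2 * (σ ^ 2 / (1 + α))))) *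
      (∫ x, f x * Real.exp (-‖x‖ ^ 2 / (2 * (σ ^ 2 / (1 - α))))) ≤
    c * (∫ x, f x * Real.exp (-‖x‖ ^ 2 / (2 * σ ^ 2))) ^ 2 := by
  have : Nontrivial (EuclideanSpace ℝ (Fin n)) :=
    Module.nontrivial_of_finrank_pos (R := ℝ) (by simpa [Nat.pos_iff_ne_zero] using by omega)
  simp only [← mul_div_assoc, div_div_eq_mul_div]
  simp only [div_eq_mul_inv, mul_assoc] at hneedle ⊢
  exact needle_reduction_general (β := ![(1 + α) * (2 * σ ^ 2)⁻¹, (1 - α) * (2 * σ ^ 2)⁻¹,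
    (2 * σ ^ 2)⁻¹]) (by simp; ring) hR hc.le hneedle hf0 hfm hflc hfsupp
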